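/- Assume 0 < y < 1. Then the random variables log det(ρ_n) + (n − p(n))·log(1 − p(n)/n) + p(n) converge in distribution, as n → ∞, to a Gaussian law N(μ_log, σ_log²) with mean μ_log = (3/2)·log(1−y) + 2y and variance σ_log² = −2·log(1−y) − 2y. -/

import Mathlib

open MeasureTheory Finset

/-- The (finite) sample space of `p`-tuples of permutations of `{1,…,n}` carries the
discrete σ-algebra. -/
instance permVecMeasurableSpace (n p : ℕ) :
    MeasurableSpace (Fin p → Equiv.Perm (Fin n)) := ⊤

/-- The uniform probability measure on `p`-tuples of permutations of `{1,…,n}`: the joint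
law of `p` independent uniform random permutations `σ₁,…,σ_p`, i.e. the law of the
columnwise ranks of an `n×p` data matrix with independent entries having continuous
distributions. -/
noncomputable def permVecUniform (n p : ℕ) : Measure (Fin p → Equiv.Perm (Fin n)) :=
  (PMF.uniformOfFintype (Fin p → Equiv.Perm (Fin n))).toMeasure

/-- Spearman's rank correlation matrix
`ρₙ = (12/(n(n²−1))) Σ_{k=1}^n (r_k − (n+1)/2·1_p)(r_k − (n+1)/2·1_p)ᵀ ∈ ℝ^{p×p}`, built
from the rank matrix `r_{kj} = σⱼ(k)`; the rank `σⱼ(k) ∈ {1,…,n}` is realized as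
`(ω j k) + 1` with `ω j k : Fin n`. -/
noncomputable def spearmanRho (n p : ℕ) (ω : Fin p → Equiv.Perm (Fin n)) :
    Matrix (Fin p) (Fin p) ℝ :=
  (12 / ((n : ℝ) * ((n : ℝ) ^ 2 - 1))) •
    ∑ k : Fin n, Matrix.vecMulVec
      (fun j => ((ω j k : ℕ) : ℝ) + 1 - ((n : ℝ) + 1) / 2)
      (fun j => ((ω j k : ℕ) : ℝ) + 1 - ((n : ℝ) + 1) / 2)

/-!
The determinant of a Gram matrix is a product of quadratic forms `uⱼᵀPⱼuⱼ`, where `uⱼ` is the `j`-th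
vector and `Pⱼ` projects orthogonally to the earlier ones. Here `uⱼ` is a uniformly permuted score
vector of sum `0` and length `1`, so `Pⱼ` may be taken to annihilate the constant vectors; given the
past it is a fixed projection of rank `n - 1 - j`, and the normalized form has mean `1`. Up to
errors summing to `o(1)`, its variance is that of the squared length of the projection of a
uniform point of the unit sphere onto a subspace of this rank: the correction involves only the
spread of the diagonal of `Pⱼ`, which is controlled on average, and the Poincaré inequality for
random transpositions bounds the moments of the fluctuations. Hence the Mellin transform
`𝔼 |det|^(it)` is asymptotically a product of deterministic factors, which harmonic sums and
Stirling's formula identify with a Gaussian characteristic function; Lévy's continuity theorem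
concludes.
-/

open Equiv Filter Topology
open scoped Matrix BigOperators

/-! ### The Poincaré inequality for random transpositions -/

section Poincare

variable {α : Type*} [Fintype α] {n : ℕ}

theorem sq_expect_le (f : α → ℝ) : (𝔼 a, f a) ^ 2 ≤ 𝔼 a, f a ^ 2 := by
  rcases isEmpty_or_nonempty α with _ | _
  · simp [univ_eq_empty]
  · simpa using expect_mul_sq_le_sq_mul_sq univ f 1

theorem expect_sub_sq [Nonempty α] (f : α → ℝ) (c : ℝ) :
    𝔼 a, (f a - c) ^ 2 = 𝔼 a, f a ^ 2 - 2 * c * 𝔼 a, f a + c ^ 2 := by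
  calc 𝔼 a, (f a - c) ^ 2 = 𝔼 a, (f a ^ 2 - 2 * c * f a + c ^ 2) := by
        exact expect_congr rfl fun a _ => by ring
    _ = _ := by
        rw [expect_add_distrib, expect_sub_distrib, ← mul_expect, Fintype.expect_const]

theorem expect_sq_sub_sq_expect (f : α → ℝ) :
    𝔼 a, f a ^ 2 - (𝔼 a, f a) ^ 2 =
      (∑ a, ∑ b, (f a - f b) ^ 2) / (2 * (Fintype.card α : ℝ) ^ 2) := by
  have hsum : ∑ a, ∑ b, (f a - f b) ^ 2 =
      2 * Fintype.card α * ∑ a, f a ^ 2 - 2 * (∑ a, f a) ^ 2 := by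
    simp only [sub_sq, sum_add_distrib, sum_sub_distrib, ← mul_sum, ← sum_mul, sum_const,
      card_univ, nsmul_eq_mul]
    ring
  rcases isEmpty_or_nonempty α with _ | _
  · simp [univ_eq_empty]
  rw [hsum, Fintype.expect_eq_sum_div_card, Fintype.expect_eq_sum_div_card]
  field_simp

/-- The Dirichlet form of the random transposition walk, restricted to one transposition: the mean
squared increment of `f` along `σ ↦ σ * swap k l`. -/
noncomputable def swapEnergy (f : Perm (Fin n) → ℝ) (k l : Fin n) : ℝ :=
  𝔼 σ, (f (σ * swap k l) - f σ) ^ 2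

/-- The conditional mean of `f σ` given `σ 0 = i`, for a uniform permutation `σ`. -/
noncomputable def condMean (f : Perm (Fin (n + 1)) → ℝ) (i : Fin (n + 1)) : ℝ :=
  𝔼 τ : Perm (Fin n), f (Perm.decomposeFin.symm (i, τ))

theorem swapEnergy_nonneg (f : Perm (Fin n) → ℝ) (k l : Fin n) : 0 ≤ swapEnergy f k l :=
  expect_nonneg fun _ _ => sq_nonneg _

theorem swapEnergy_comm (f : Perm (Fin n) → ℝ) (k l : Fin n) :
    swapEnergy f k l = swapEnergy f l k := by
  simp only [swapEnergy, swap_comm]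

theorem swapEnergy_self (f : Perm (Fin n) → ℝ) (k : Fin n) : swapEnergy f k k = 0 := by
  simp [swapEnergy, ← Perm.one_def]

theorem sum_swapEnergy (f : Perm (Fin n) → ℝ) :
    ∑ k, ∑ l, swapEnergy f k l = 𝔼 σ, ∑ k, ∑ l, (f (σ * swap k l) - f σ) ^ 2 := by
  simp only [swapEnergy, expect_sum_comm]

theorem expect_mul_right (f : Perm (Fin n) → ℝ) (τ : Perm (Fin n)) :
    𝔼 σ, f (σ * τ) = 𝔼 σ, f σ :=
  Fintype.expect_equiv (Equiv.mulRight τ) _ _ fun _ => rfl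

theorem expect_condMean (f : Perm (Fin (n + 1)) → ℝ) : 𝔼 i, condMean f i = 𝔼 σ, f σ := by
  rw [← Fintype.expect_equiv Perm.decomposeFin.symm _ f fun _ => rfl, ← univ_product_univ,
    expect_product]
  rfl

theorem condMean_eq_expect_ite (f : Perm (Fin (n + 1)) → ℝ) (i : Fin (n + 1)) :
    condMean f i = (n + 1) * 𝔼 σ, if σ 0 = i then f σ else 0 := by
  have hcond : ∀ j, condMean (fun σ => if σ 0 = i then f σ else 0) j =
      if i = j then condMean f i else 0 := by
    intro j
    simp only [condMean, Perm.decomposeFin_symm_apply_zero]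
    rcases eq_or_ne i j with rfl | hij
    · simp
    · simp [hij, hij.symm]
  rw [← expect_condMean]
  simp only [hcond, Fintype.expect_eq_sum_div_card, sum_ite_eq, mem_univ, if_true,
    Fintype.card_fin]
  push_cast
  field_simp

theorem condMean_swap_mul (f : Perm (Fin (n + 1)) → ℝ) (i j : Fin (n + 1)) :
    condMean (fun σ => f (swap i j * σ)) i = condMean f j := by
  rw [condMean_eq_expect_ite, condMean_eq_expect_ite]
  congr 1
  refine Fintype.expect_equiv (Equiv.mulLeft (swap i j)) _ _ fun σ => ?_
  have : swap i j (σ 0) = j ↔ σ 0 = i := by rw [swap_apply_eq_iff, swap_apply_right]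
  simp only [Equiv.coe_mulLeft, Perm.mul_apply, this]

theorem sum_sum_condMean_sub_sq_le (f : Perm (Fin (n + 1)) → ℝ) :
    ∑ i, ∑ j, (condMean f i - condMean f j) ^ 2 ≤ (n + 1) * ∑ l, swapEnergy f 0 l := by
  have hij : ∀ i j, (condMean f i - condMean f j) ^ 2 ≤
      (n + 1) * 𝔼 σ, if σ 0 = i then (f (swap i j * σ) - f σ) ^ 2 else 0 := by
    intro i j
    rw [← condMean_eq_expect_ite fun σ => (f (swap i j * σ) - f σ) ^ 2, sub_sq_comm,
      ← condMean_swap_mul f i j, condMean, condMean, ← expect_sub_distrib]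
    exact sq_expect_le _
  calc ∑ i, ∑ j, (condMean f i - condMean f j) ^ 2
      ≤ ∑ i, ∑ j, (n + 1) * 𝔼 σ, if σ 0 = i then (f (swap i j * σ) - f σ) ^ 2 else 0 :=
        sum_le_sum fun i _ => sum_le_sum fun j _ => hij i j
    _ = (n + 1) * 𝔼 σ, ∑ j, (f (swap (σ 0) j * σ) - f σ) ^ 2 := by
        simp only [← mul_sum]
        rw [sum_comm]
        simp [← expect_sum_comm]
    _ = (n + 1) * ∑ l, swapEnergy f 0 l := by
        simp only [swapEnergy, ← expect_sum_comm]
        congr! 2 with σ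
        rw [← Equiv.sum_comp σ]
        simp only [mul_swap_eq_swap_mul]

theorem variance_condMean_le (f : Perm (Fin (n + 1)) → ℝ) :
    𝔼 i, condMean f i ^ 2 - (𝔼 i, condMean f i) ^ 2 ≤
      (∑ l, swapEnergy f 0 l) / (2 * (n + 1)) := by
  rw [expect_sq_sub_sq_expect, Fintype.card_fin, div_le_div_iff₀ (by positivity) (by positivity)]
  push_cast
  nlinarith [mul_le_mul_of_nonneg_left (sum_sum_condMean_sub_sq_le f)
    (show (0 : ℝ) ≤ 2 * (n + 1) by positivity)]

theorem decomposeFin_symm_mul_swap_succ (i : Fin (n + 1)) (τ : Perm (Fin n)) (k l : Fin n) :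
    Perm.decomposeFin.symm (i, τ) * swap k.succ l.succ =
      Perm.decomposeFin.symm (i, τ * swap k l) := by
  ext x
  refine Fin.cases ?_ (fun x => ?_) x
  · simp [swap_apply_of_ne_of_ne (Fin.succ_ne_zero k).symm (Fin.succ_ne_zero l).symm]
  · have : swap k.succ l.succ x.succ = (swap k l x).succ :=
      (Function.Injective.swap_apply (Fin.succ_injective n) k l x)
    simp [this]

theorem expect_swapEnergy_decomposeFin (f : Perm (Fin (n + 1)) → ℝ) (k l : Fin n) :
    𝔼 i, swapEnergy (fun τ => f (Perm.decomposeFin.symm (i, τ))) k l =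
      swapEnergy f k.succ l.succ := by
  simp only [swapEnergy, ← decomposeFin_symm_mul_swap_succ]
  exact expect_condMean fun σ => (f (σ * swap k.succ l.succ) - f σ) ^ 2

theorem variance_le_of_conditioning_zero {c : ℝ}
    (ih : ∀ f : Perm (Fin n) → ℝ,
      𝔼 σ, f σ ^ 2 - (𝔼 σ, f σ) ^ 2 ≤ c * ∑ k, ∑ l, swapEnergy f k l)
    (f : Perm (Fin (n + 1)) → ℝ) :
    𝔼 σ, f σ ^ 2 - (𝔼 σ, f σ) ^ 2 ≤ c * ∑ k : Fin n, ∑ l : Fin n, swapEnergy f k.succ l.succ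
      + (∑ l, swapEnergy f 0 l) / (2 * (n + 1)) := by
  have hwithin : 𝔼 i, condMean (fun σ => f σ ^ 2) i - 𝔼 i, condMean f i ^ 2 ≤
      c * ∑ k : Fin n, ∑ l : Fin n, swapEnergy f k.succ l.succ := by
    rw [← expect_sub_distrib]
    refine (expect_le_expect fun i _ => ih fun τ => f (Perm.decomposeFin.symm (i, τ))).trans ?_
    simp only [← mul_expect, expect_sum_comm, expect_swapEnergy_decomposeFin, le_refl]
  have hbetween := variance_condMean_le f
  rw [expect_condMean] at hwithin hbetween
  linarith

theorem swapEnergy_mul_right (f : Perm (Fin n) → ℝ) (τ : Perm (Fin n)) (k l : Fin n) :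
    swapEnergy (fun σ => f (σ * τ)) k l = swapEnergy f (τ⁻¹ k) (τ⁻¹ l) := by
  have hconj : ∀ σ, σ * τ * swap (τ⁻¹ k) (τ⁻¹ l) = σ * swap k l * τ := by
    intro σ
    rw [swap_apply_apply]
    group
  rw [swapEnergy, swapEnergy, ← expect_mul_right (fun σ => (f (σ * swap _ _) - f σ) ^ 2) τ]
  simp only [hconj]

theorem variance_le_of_conditioning {c : ℝ}
    (ih : ∀ f : Perm (Fin n) → ℝ,
      𝔼 σ, f σ ^ 2 - (𝔼 σ, f σ) ^ 2 ≤ c * ∑ k, ∑ l, swapEnergy f k l)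
    (f : Perm (Fin (n + 1)) → ℝ) (k : Fin (n + 1)) :
    𝔼 σ, f σ ^ 2 - (𝔼 σ, f σ) ^ 2 ≤
      c * (∑ i, ∑ j, swapEnergy f i j - 2 * ∑ l, swapEnergy f k l)
        + (∑ l, swapEnergy f k l) / (2 * (n + 1)) := by
  set τ := swap 0 k
  have hτ : τ 0 = k := swap_apply_left 0 k
  have hrow : ∑ l, swapEnergy f k (τ l) = ∑ l, swapEnergy f k l :=
    Equiv.sum_comp τ fun l => swapEnergy f k l
  have hminor : ∑ i : Fin n, ∑ j : Fin n, swapEnergy f (τ i.succ) (τ j.succ) =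
      ∑ i, ∑ j, swapEnergy f i j - 2 * ∑ l, swapEnergy f k l := by
    have hall : ∑ i, ∑ j, swapEnergy f i j = ∑ i, ∑ j, swapEnergy f (τ i) (τ j) := by
      rw [← Equiv.sum_comp τ]
      exact sum_congr rfl fun i _ => (Equiv.sum_comp τ _).symm
    rw [hall, ← hrow]
    simp only [Fin.sum_univ_succ, sum_add_distrib, hτ, swapEnergy_comm f _ k, swapEnergy_self]
    ring
  have h := variance_le_of_conditioning_zero ih fun σ => f (σ * τ)
  rw [expect_mul_right f τ, expect_mul_right (fun σ => f σ ^ 2) τ] at h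
  simpa only [swapEnergy_mul_right, τ, swap_inv, hτ, hrow, hminor] using h

-- Averaging the conditioning step over the position `k` closes the induction: the constants satisfy
-- `(n - 1) / (2 n) + 1 / (2 (n + 1)) ≤ 1 / 2`.
theorem variance_le_sum_swapEnergy (n : ℕ) (f : Perm (Fin n) → ℝ) :
    𝔼 σ, f σ ^ 2 - (𝔼 σ, f σ) ^ 2 ≤ 1 / (2 * n) * ∑ k, ∑ l, swapEnergy f k l := by
  induction n with
  | zero => simp
  | succ n ih =>
    have hk := fun k => variance_le_of_conditioning ih f k
    set V := 𝔼 σ, f σ ^ 2 - (𝔼 σ, f σ) ^ 2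
    set S := ∑ k, ∑ l, swapEnergy f k l
    have hS : 0 ≤ S := sum_nonneg fun _ _ => sum_nonneg fun _ _ => swapEnergy_nonneg _ _ _
    have hsum : (n + 1) * V ≤ 1 / (2 * n) * ((n + 1) * S - 2 * S) + S / (2 * (n + 1)) := by
      have := sum_le_sum fun k (_ : k ∈ (univ : Finset (Fin (n + 1)))) => hk k
      simpa only [sum_add_distrib, ← mul_sum, ← sum_div, sum_sub_distrib, sum_const, card_univ,
        Fintype.card_fin, nsmul_eq_mul, Nat.cast_add, Nat.cast_one] using this
    have hcoef : 1 / (2 * n) * ((n + 1) * S - 2 * S) + S / (2 * (n + 1)) ≤ S / 2 := by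
      rcases n.eq_zero_or_pos with rfl | hn
      · simp
      · have hid : 1 / (2 * n) * ((n + 1) * S - 2 * S) + S / (2 * (n + 1)) =
            S / 2 - S / (2 * n * (n + 1)) := by
          field_simp
          ring
        rw [hid]
        exact sub_le_self _ (by positivity)
    push_cast
    rw [div_mul_eq_mul_div, le_div_iff₀ (by positivity)]
    linarith

theorem swapEnergy_sq_le (f : Perm (Fin n) → ℝ) (k l : Fin n) :
    swapEnergy (fun σ => f σ ^ 2) k l ≤ 4 * 𝔼 σ, (f (σ * swap k l) - f σ) ^ 2 * f σ ^ 2 := by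
  have hflip : 𝔼 σ, (f (σ * swap k l) - f σ) ^ 2 * f (σ * swap k l) ^ 2 =
      𝔼 σ, (f (σ * swap k l) - f σ) ^ 2 * f σ ^ 2 := by
    rw [← expect_mul_right (fun σ => (f (σ * swap k l) - f σ) ^ 2 * f σ ^ 2) (swap k l)]
    simp only [mul_swap_mul_self, sub_sq_comm]
  have hpoly : ∀ x y : ℝ,
      (x ^ 2 - y ^ 2) ^ 2 ≤ 2 * ((x - y) ^ 2 * x ^ 2) + 2 * ((x - y) ^ 2 * y ^ 2) :=
    fun x y => by nlinarith [sq_nonneg ((x - y) * (x - y))]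
  calc swapEnergy (fun σ => f σ ^ 2) k l
      ≤ 𝔼 σ, (2 * ((f (σ * swap k l) - f σ) ^ 2 * f (σ * swap k l) ^ 2) +
          2 * ((f (σ * swap k l) - f σ) ^ 2 * f σ ^ 2)) :=
        expect_le_expect fun σ _ => hpoly (f (σ * swap k l)) (f σ)
    _ = 4 * 𝔼 σ, (f (σ * swap k l) - f σ) ^ 2 * f σ ^ 2 := by
        rw [expect_add_distrib, ← mul_expect, ← mul_expect, hflip]
        ring

theorem central_moments_le_of_sum_swap_sq_le {D : ℝ} {f : Perm (Fin n) → ℝ}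
    (hf : ∀ σ, ∑ k, ∑ l, (f (σ * swap k l) - f σ) ^ 2 ≤ D) :
    𝔼 σ, (f σ - 𝔼 τ, f τ) ^ 2 ≤ D / (2 * n) ∧
      𝔼 σ, (f σ - 𝔼 τ, f τ) ^ 4 ≤ 5 * (D / (2 * n)) ^ 2 := by
  set μ := 𝔼 τ, f τ with hμ
  set g : Perm (Fin n) → ℝ := fun σ => (f σ - μ) ^ 2 with hg
  have hvar : 𝔼 σ, g σ ≤ D / (2 * n) := by
    calc 𝔼 σ, g σ = 𝔼 σ, f σ ^ 2 - μ ^ 2 := by rw [hg, expect_sub_sq, ← hμ]; ring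
      _ ≤ 1 / (2 * n) * ∑ k, ∑ l, swapEnergy f k l := variance_le_sum_swapEnergy n f
      _ ≤ 1 / (2 * n) * D := by
          rw [sum_swapEnergy]
          gcongr
          exact expect_le univ_nonempty fun σ _ => hf σ
      _ = D / (2 * n) := one_div_mul_eq_div _ _
  refine ⟨hvar, ?_⟩
  have henergy : ∀ k l, swapEnergy g k l ≤ 4 * 𝔼 σ, (f (σ * swap k l) - f σ) ^ 2 * g σ := by
    intro k l
    simpa only [sub_sub_sub_cancel_right] using swapEnergy_sq_le (fun σ => f σ - μ) k l
  have hsum : ∑ k, ∑ l, swapEnergy g k l ≤ 4 * (D * 𝔼 σ, g σ) := by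
    refine (sum_le_sum fun k _ => sum_le_sum fun l _ => henergy k l).trans ?_
    simp only [← mul_sum, ← expect_sum_comm, ← sum_mul, mul_expect univ g]
    gcongr with σ
    exact hf σ
  have hg0 : 0 ≤ 𝔼 σ, g σ := expect_nonneg fun _ _ => sq_nonneg _
  calc 𝔼 σ, (f σ - μ) ^ 4 = 𝔼 σ, g σ ^ 2 := by simp only [hg, ← pow_mul]
    _ ≤ (𝔼 σ, g σ) ^ 2 + 1 / (2 * n) * ∑ k, ∑ l, swapEnergy g k l := by
        linarith [variance_le_sum_swapEnergy n g]
    _ ≤ (𝔼 σ, g σ) ^ 2 + 1 / (2 * n) * (4 * (D * 𝔼 σ, g σ)) := by gcongr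
    _ = (𝔼 σ, g σ) ^ 2 + 4 * (D / (2 * n)) * 𝔼 σ, g σ := by ring
    _ ≤ (D / (2 * n)) ^ 2 + 4 * (D / (2 * n)) * (D / (2 * n)) := by
        have := hg0.trans hvar
        gcongr
    _ = 5 * (D / (2 * n)) ^ 2 := by ring

end Poincare

/-! ### Quadratic forms of randomly permuted score vectors -/

section PermutedScores

variable {n : ℕ}

/-- A rank score vector: centred, of unit length, and with all entries of the order `n ^ (-1/2)`,
uniformly through the constant `C`. -/
structure IsScore (C : ℝ) (a : Fin n → ℝ) : Prop where
  sum_eq_zero : ∑ i, a i = 0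
  sum_sq_eq_one : ∑ i, a i ^ 2 = 1
  sq_le : ∀ i, a i ^ 2 ≤ C / n

/-- The orthogonal projection onto the vectors with zero sum. -/
noncomputable def centering (n : ℕ) : Matrix (Fin n) (Fin n) ℝ :=
  1 - Matrix.of fun _ _ => (n : ℝ)⁻¹

theorem centering_mulVec (u : Fin n → ℝ) (hu : ∑ i, u i = 0) : centering n *ᵥ u = u := by
  ext i
  simp only [centering, Matrix.sub_mulVec, Matrix.one_mulVec, Pi.sub_apply]
  simp [Matrix.mulVec, dotProduct, ← mul_sum, hu]

theorem isSymm_centering : (centering n).IsSymm := by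
  simp [Matrix.IsSymm, centering, Matrix.transpose_sub, ← Matrix.ext_iff]

theorem centering_mulVec_one : centering n *ᵥ 1 = 0 := by
  ext i
  have : (n : ℝ) ≠ 0 := by have := i.pos; positivity
  simp only [centering, Matrix.sub_mulVec, Matrix.one_mulVec, Pi.sub_apply]
  simp [Matrix.mulVec, dotProduct, this]

theorem centering_apply_self (i : Fin n) : centering n i i = (n - 1) / n := by
  have : (n : ℝ) ≠ 0 := by have := i.pos; positivity
  rw [centering, Matrix.sub_apply, Matrix.one_apply_eq, Matrix.of_apply]
  field_simp

theorem trace_centering (hn : n ≠ 0) : (centering n).trace = n - 1 := by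
  have : (n : ℝ) ≠ 0 := by positivity
  simp only [Matrix.trace, Matrix.diag_apply, centering_apply_self, sum_const, card_univ,
    Fintype.card_fin, nsmul_eq_mul]
  field_simp

theorem centering_mul_self : centering n * centering n = centering n := by
  ext i j
  refine congrFun (centering_mulVec (fun k => centering n k j) ?_) i
  simpa [Matrix.mulVec, dotProduct, isSymm_centering.apply] using
    congrFun (centering_mulVec_one (n := n)) j

theorem dotProduct_mulVec_eq_sum {ι R : Type*} [Fintype ι] [CommSemiring R] (A : Matrix ι ι R)
    (u v : ι → R) :
    u ⬝ᵥ A *ᵥ v = ∑ k, ∑ l, A k l * (u k * v l) := by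
  simp only [dotProduct, Matrix.mulVec, mul_sum]
  exact sum_congr rfl fun k _ => sum_congr rfl fun l _ => by ring

theorem sum_row_eq_zero {A : Matrix (Fin n) (Fin n) ℝ} (hA : A *ᵥ 1 = 0) (k : Fin n) :
    ∑ l, A k l = 0 := by
  simpa [Matrix.mulVec, dotProduct] using congrFun hA k

theorem sum_col_eq_zero {A : Matrix (Fin n) (Fin n) ℝ} (hs : A.IsSymm) (hA : A *ᵥ 1 = 0)
    (l : Fin n) : ∑ k, A k l = 0 := by
  simpa only [hs.apply] using sum_row_eq_zero hA l

open scoped Classical in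
theorem exists_perm_comp_eq {ι α : Type*} [Finite α] {x y : ι → α}
    (h : ∀ i j, x i = x j ↔ y i = y j) : ∃ τ : Perm α, ∀ i, τ (x i) = y i := by
  let e : Set.range x ≃ Set.range y := (Setoid.quotientKerEquivRange x).symm.trans
    ((Quotient.congrRight h).trans (Setoid.quotientKerEquivRange y))
  refine ⟨extendSubtype e, fun i => ?_⟩
  have hx : (Setoid.quotientKerEquivRange x).symm ⟨x i, i, rfl⟩ = Quotient.mk _ i :=
    (symm_apply_eq _).2 rfl
  rw [extendSubtype_apply_of_mem e (x i) ⟨i, rfl⟩]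
  simp only [e, trans_apply, hx]
  rfl

theorem exists_expect_mul_eq (hn : 2 ≤ n) (a : Fin n → ℝ) : ∃ α β : ℝ, ∀ k l,
    𝔼 σ : Perm (Fin n), a (σ k) * a (σ l) = α + if k = l then β else 0 := by
  have hperm : ∀ k l k' l' : Fin n, (k = l ↔ k' = l') →
      𝔼 σ : Perm (Fin n), a (σ k') * a (σ l') = 𝔼 σ : Perm (Fin n), a (σ k) * a (σ l) := by
    intro k l k' l' h
    obtain ⟨τ, hτ⟩ := exists_perm_comp_eq (x := ![k, l]) (y := ![k', l'])
      (by simp [Fin.forall_fin_succ, h, eq_comm])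
    have hk : τ k = k' := hτ 0
    have hl : τ l = l' := hτ 1
    rw [← hk, ← hl]
    exact expect_mul_right (fun σ => a (σ k) * a (σ l)) τ
  let z : Fin 2 → Fin n := Fin.castLE hn
  have hz : z 0 ≠ z 1 := (Fin.castLE_injective hn).ne zero_ne_one
  refine ⟨𝔼 σ : Perm (Fin n), a (σ (z 0)) * a (σ (z 1)),
    𝔼 σ : Perm (Fin n), a (σ (z 0)) * a (σ (z 0)) - 𝔼 σ : Perm (Fin n), a (σ (z 0)) * a (σ (z 1)),
    fun k l => ?_⟩
  split_ifs with hkl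
  · rw [add_sub_cancel, hperm (z 0) (z 0) k l (by simp [hkl])]
  · rw [add_zero, hperm (z 0) (z 1) k l (by simp [hkl, hz])]

/-- The product of four permuted scores, averaged over all permutations. -/
noncomputable def fourthMoment (a : Fin n → ℝ) (k l p q : Fin n) : ℝ :=
  𝔼 σ : Perm (Fin n), a (σ k) * a (σ l) * a (σ p) * a (σ q)

theorem fourthMoment_congr (a : Fin n → ℝ) {k l p q k' l' p' q' : Fin n}
    (h : ∀ i j, ![k, l, p, q] i = ![k, l, p, q] j ↔ ![k', l', p', q'] i = ![k', l', p', q'] j) :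
    fourthMoment a k l p q = fourthMoment a k' l' p' q' := by
  obtain ⟨τ, hτ⟩ := exists_perm_comp_eq h
  have hk : τ k = k' := hτ 0
  have hl : τ l = l' := hτ 1
  have hp : τ p = p' := hτ 2
  have hq : τ q = q' := hτ 3
  rw [← hk, ← hl, ← hp, ← hq]
  exact (expect_mul_right (fun σ => a (σ k) * a (σ l) * a (σ p) * a (σ q)) τ).symm

theorem abs_fourthMoment_le {a : Fin n → ℝ} {b : ℝ} (hb : ∀ i, a i ^ 2 ≤ b) (k l p q : Fin n) :
    |fourthMoment a k l p q| ≤ b ^ 2 := by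
  have hmul : ∀ i j, |a i * a j| ≤ b := fun i j => abs_le.2 <| by
    constructor <;> nlinarith [hb i, hb j, sq_nonneg (a i - a j), sq_nonneg (a i + a j)]
  refine (abs_expect_le _ _).trans (expect_le univ_nonempty fun σ _ => ?_)
  rw [mul_assoc, abs_mul, sq]
  exact mul_le_mul (hmul _ _) (hmul _ _) (abs_nonneg _) ((abs_nonneg _).trans (hmul k k))

theorem exists_fourthMoment_eq_of_ne (hn : 4 ≤ n) {a : Fin n → ℝ} {b : ℝ}
    (hb : ∀ i, a i ^ 2 ≤ b) :
    ∃ e₄ e₃₁ e₂₂ e₂₁₁ e₁₁₁₁ : ℝ,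
      (|e₄| ≤ b ^ 2 ∧ |e₃₁| ≤ b ^ 2 ∧ |e₂₂| ≤ b ^ 2 ∧ |e₂₁₁| ≤ b ^ 2 ∧ |e₁₁₁₁| ≤ b ^ 2) ∧
      (∀ k, fourthMoment a k k k k = e₄) ∧
      (∀ k l, k ≠ l → fourthMoment a k k k l = e₃₁) ∧
      (∀ k l, k ≠ l → fourthMoment a k k l l = e₂₂) ∧
      (∀ k l p, k ≠ l → k ≠ p → l ≠ p → fourthMoment a k k l p = e₂₁₁) ∧
      ∀ k l p q, k ≠ l → k ≠ p → k ≠ q → l ≠ p → l ≠ q → p ≠ q →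
        fourthMoment a k l p q = e₁₁₁₁ := by
  let z : Fin 4 → Fin n := Fin.castLE hn
  have hz : z.Injective := Fin.castLE_injective hn
  have hM := abs_fourthMoment_le hb
  refine ⟨fourthMoment a (z 0) (z 0) (z 0) (z 0), fourthMoment a (z 0) (z 0) (z 0) (z 1),
    fourthMoment a (z 0) (z 0) (z 1) (z 1), fourthMoment a (z 0) (z 0) (z 1) (z 2),
    fourthMoment a (z 0) (z 1) (z 2) (z 3),
    ⟨hM _ _ _ _, hM _ _ _ _, hM _ _ _ _, hM _ _ _ _, hM _ _ _ _⟩, ?_, ?_, ?_, ?_, ?_⟩ <;>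
  intros <;> apply fourthMoment_congr <;> simp [Fin.forall_fin_succ, *, Ne.symm, hz.eq_iff]

-- By exchangeability the fourth moments only depend on the coincidences among the indices. The
-- summands `fᵢ` miss one index each, so they disappear once `fourthMoment a` is contracted with
-- matrices whose rows and columns sum to zero.
theorem exists_fourthMoment_eq (hn : 4 ≤ n) {a : Fin n → ℝ} {b : ℝ} (hb : ∀ i, a i ^ 2 ≤ b) :
    ∃ (f₁ f₂ f₃ f₄ : Fin n → Fin n → Fin n → ℝ) (γ η : ℝ), |η| ≤ 26 * b ^ 2 ∧
      ∀ k l p q, fourthMoment a k l p q = f₁ l p q + f₂ k p q + f₃ k l q + f₄ k l p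
        + γ * ((if k = l ∧ p = q then 1 else 0) + (if k = p ∧ l = q then 1 else 0)
          + (if k = q ∧ l = p then 1 else 0))
        + η * (if k = l ∧ k = p ∧ k = q then 1 else 0) := by
  obtain ⟨e₄, e₃₁, e₂₂, e₂₁₁, e₁₁₁₁, ⟨b₄, b₃₁, b₂₂, b₂₁₁, b₁₁₁₁⟩, h₄, h₃₁, h₂₂, h₂₁₁, h₁₁₁₁⟩ :=
    exists_fourthMoment_eq_of_ne hn hb
  have hcomm₁ : ∀ k l p q, fourthMoment a k l p q = fourthMoment a l k p q := by
    simp only [fourthMoment, mul_comm, mul_left_comm, implies_true]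
  have hcomm₂ : ∀ k l p q, fourthMoment a k l p q = fourthMoment a k p l q := by
    simp only [fourthMoment, mul_comm, mul_left_comm, implies_true]
  have hcomm₃ : ∀ k l p q, fourthMoment a k l p q = fourthMoment a k l q p := by
    simp only [fourthMoment, mul_comm, mul_left_comm, implies_true]
  let δ₂ : Fin n → Fin n → ℝ := fun i j => if i = j then 1 else 0
  let δ₃ : Fin n → Fin n → Fin n → ℝ := fun i j k => if i = j ∧ i = k then 1 else 0
  let β := e₂₁₁ - e₁₁₁₁
  let ζ := e₃₁ - 3 * e₂₁₁ + 2 * e₁₁₁₁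
  refine ⟨fun l p q => β * (δ₂ l q + δ₂ p q) + ζ * δ₃ l p q,
    fun k p q => β * δ₂ k q + ζ * δ₃ k p q, fun k l q => ζ * δ₃ k l q,
    fun k l p => e₁₁₁₁ + β * (δ₂ k l + δ₂ k p + δ₂ l p) + ζ * δ₃ k l p,
    e₂₂ - 2 * e₂₁₁ + e₁₁₁₁, e₄ - 3 * e₂₂ - 4 * e₃₁ + 12 * e₂₁₁ - 6 * e₁₁₁₁, ?_, fun k l p q => ?_⟩
  · rw [abs_le] at *
    constructor <;> linarith
  · by_cases hkl : k = l <;> by_cases hkp : k = p <;> by_cases hkq : k = q <;>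
      by_cases hlp : l = p <;> by_cases hlq : l = q <;> by_cases hpq : p = q <;> grind

end PermutedScores

section CenteredProj

variable {n : ℕ}

/-- Orthogonal projections of `Fin n → ℝ` whose range is contained in the hyperplane of vectors with
zero sum. The dimension of the range is the trace. -/
structure IsCenteredProj (P : Matrix (Fin n) (Fin n) ℝ) : Prop where
  isSymm : P.IsSymm
  mul_self : P * P = P
  mulVec_one : P *ᵥ 1 = 0

theorem isCenteredProj_centering : IsCenteredProj (centering n) :=
  ⟨isSymm_centering, centering_mul_self, centering_mulVec_one⟩

namespace IsCenteredProj

variable {P : Matrix (Fin n) (Fin n) ℝ}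

theorem dotProduct_mulVec (hP : IsCenteredProj P) (u v : Fin n → ℝ) :
    u ⬝ᵥ P *ᵥ v = (P *ᵥ u) ⬝ᵥ (P *ᵥ v) := by
  conv_lhs => rw [← hP.mul_self, ← Matrix.mulVec_mulVec, Matrix.dotProduct_mulVec,
    ← Matrix.mulVec_transpose, hP.isSymm.eq]

theorem dotProduct_mulVec_self_nonneg (hP : IsCenteredProj P) (u : Fin n → ℝ) :
    0 ≤ u ⬝ᵥ P *ᵥ u := by
  rw [hP.dotProduct_mulVec]
  exact dotProduct_self_star_nonneg (P *ᵥ u)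

theorem dotProduct_mulVec_self_le (hP : IsCenteredProj P) (u : Fin n → ℝ) :
    u ⬝ᵥ P *ᵥ u ≤ u ⬝ᵥ u := by
  have hres : 0 ≤ (u - P *ᵥ u) ⬝ᵥ (u - P *ᵥ u) := dotProduct_self_star_nonneg (u - P *ᵥ u)
  have := hP.dotProduct_mulVec u u
  simp only [sub_dotProduct, dotProduct_sub, dotProduct_comm (P *ᵥ u) u] at hres
  linarith

theorem apply_self (hP : IsCenteredProj P) (k : Fin n) : P k k = ∑ l, P k l ^ 2 := by
  conv_lhs => rw [← hP.mul_self, Matrix.mul_apply]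
  simp only [sq, hP.isSymm.apply]

theorem sum_sq (hP : IsCenteredProj P) : ∑ k, ∑ l, P k l ^ 2 = P.trace :=
  (sum_congr rfl fun k _ => hP.apply_self k).symm

theorem apply_self_nonneg (hP : IsCenteredProj P) (k : Fin n) : 0 ≤ P k k :=
  (hP.apply_self k).symm ▸ sum_nonneg fun _ _ => sq_nonneg _

theorem apply_self_le_one (hP : IsCenteredProj P) (k : Fin n) : P k k ≤ 1 := by
  simpa using hP.dotProduct_mulVec_self_le (Pi.single k 1)

theorem trace_le (hP : IsCenteredProj P) : P.trace ≤ n := by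
  simpa [Matrix.trace] using sum_le_sum fun k (_ : k ∈ univ) => hP.apply_self_le_one k

theorem sum_apply_self_sq_le (hP : IsCenteredProj P) : ∑ k, P k k ^ 2 ≤ P.trace :=
  sum_le_sum fun k _ =>
    pow_le_of_le_one (hP.apply_self_nonneg k) (hP.apply_self_le_one k) two_ne_zero

theorem sum_mulVec_sq (hP : IsCenteredProj P) (u : Fin n → ℝ) :
    ∑ k, (P *ᵥ u) k ^ 2 = u ⬝ᵥ P *ᵥ u := by
  rw [hP.dotProduct_mulVec]
  simp only [dotProduct, sq]

end IsCenteredProj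

end CenteredProj

section Moments

variable {n : ℕ} {A : Matrix (Fin n) (Fin n) ℝ} {C : ℝ} {a : Fin n → ℝ}

theorem sum_contraction_eq (hs : A.IsSymm) (hA : A *ᵥ 1 = 0)
    (f₁ f₂ f₃ f₄ : Fin n → Fin n → Fin n → ℝ) (γ η : ℝ) :
    ∑ k, ∑ l, ∑ p, ∑ q, A k l * A p q * (f₁ l p q + f₂ k p q + f₃ k l q + f₄ k l p
        + γ * ((if k = l ∧ p = q then 1 else 0) + (if k = p ∧ l = q then 1 else 0)
          + (if k = q ∧ l = p then 1 else 0))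
        + η * (if k = l ∧ k = p ∧ k = q then 1 else 0)) =
      γ * (A.trace ^ 2 + 2 * ∑ k, ∑ l, A k l ^ 2) + η * ∑ k, A k k ^ 2 := by
  have hrow := sum_row_eq_zero hA
  have hcol := sum_col_eq_zero hs hA
  have h₁ : ∑ k, ∑ l, ∑ p, ∑ q, A k l * A p q * f₁ l p q = 0 := by
    rw [sum_comm]
    simp only [mul_assoc, ← mul_sum, ← sum_mul, hcol, zero_mul, sum_const_zero]
  have h₂ : ∑ k, ∑ l, ∑ p, ∑ q, A k l * A p q * f₂ k p q = 0 := by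
    simp only [mul_assoc, ← mul_sum, ← sum_mul, hrow, zero_mul, sum_const_zero]
  have h₃ : ∑ k, ∑ l, ∑ p, ∑ q, A k l * A p q * f₃ k l q = 0 := by
    refine sum_eq_zero fun k _ => sum_eq_zero fun l _ => sum_comm.trans <| sum_eq_zero fun q _ => ?_
    rw [← sum_mul, ← mul_sum, hcol, mul_zero, zero_mul]
  have h₄ : ∑ k, ∑ l, ∑ p, ∑ q, A k l * A p q * f₄ k l p = 0 := by
    refine sum_eq_zero fun k _ => sum_eq_zero fun l _ => sum_eq_zero fun p _ => ?_
    rw [← sum_mul, ← mul_sum, hrow, mul_zero, zero_mul]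
  simp only [mul_add, sum_add_distrib, h₁, h₂, h₃, h₄, ite_and, mul_ite, mul_one, mul_zero,
    sum_ite_eq, sum_ite_irrel, sum_const_zero, mem_univ, if_true]
  simp only [← mul_sum, ← sum_mul, mul_comm _ γ, mul_comm _ η]
  simp only [hs.apply, Matrix.trace, Matrix.diag, sq]
  ring

theorem expect_sq_quadForm_eq_sum (a : Fin n → ℝ) :
    𝔼 σ : Perm (Fin n), ((a ∘ σ) ⬝ᵥ A *ᵥ (a ∘ σ)) ^ 2 =
      ∑ k, ∑ l, ∑ p, ∑ q, A k l * A p q * fourthMoment a k l p q := by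
  simp only [fourthMoment, mul_expect, ← expect_sum_comm]
  refine expect_congr rfl fun σ _ => ?_
  simp only [dotProduct_mulVec_eq_sum, sq, sum_mul, mul_sum, Function.comp_apply]
  exact sum_congr rfl fun k _ => sum_congr rfl fun l _ => sum_congr rfl fun p _ =>
    sum_congr rfl fun q _ => by ring

theorem IsScore.comp_dotProduct_centering (ha : IsScore C a) (σ : Perm (Fin n)) :
    (a ∘ σ) ⬝ᵥ centering n *ᵥ (a ∘ σ) = 1 := by
  rw [centering_mulVec (a ∘ σ) ((Equiv.sum_comp σ a).trans ha.sum_eq_zero), ← ha.sum_sq_eq_one,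
    ← Equiv.sum_comp σ]
  simp only [dotProduct, Function.comp_apply, sq]

theorem expect_quadForm (hn : 2 ≤ n) (ha : IsScore C a) (hA : A *ᵥ 1 = 0) :
    𝔼 σ : Perm (Fin n), (a ∘ σ) ⬝ᵥ A *ᵥ (a ∘ σ) = A.trace / (n - 1) := by
  obtain ⟨α, β, hαβ⟩ := exists_expect_mul_eq hn a
  have htrace : ∀ B : Matrix (Fin n) (Fin n) ℝ, B *ᵥ 1 = 0 →
      𝔼 σ : Perm (Fin n), (a ∘ σ) ⬝ᵥ B *ᵥ (a ∘ σ) = β * B.trace := by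
    intro B hB
    simp only [dotProduct_mulVec_eq_sum, expect_sum_comm, Function.comp_apply, ← mul_expect, hαβ,
      mul_add, sum_add_distrib, ← sum_mul, sum_row_eq_zero hB, mul_ite, sum_ite_eq, mem_univ,
      if_true, mul_zero, zero_mul, zero_add, Matrix.trace, Matrix.diag]
    exact mul_comm _ _
  have hn1 : (n : ℝ) - 1 ≠ 0 := by
    have : (2 : ℝ) ≤ n := by exact_mod_cast hn
    linarith
  have hβ := htrace (centering n) centering_mulVec_one
  simp only [ha.comp_dotProduct_centering, Fintype.expect_const,
    trace_centering (by omega : n ≠ 0)] at hβ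
  rw [htrace A hA, eq_div_iff hn1]
  linear_combination -A.trace * hβ

theorem exists_expect_sq_quadForm_eq (hn : 4 ≤ n) (ha : IsScore C a) :
    ∃ η : ℝ, |η| ≤ 26 * (C / n) ^ 2 ∧ ∀ A : Matrix (Fin n) (Fin n) ℝ, A.IsSymm → A *ᵥ 1 = 0 →
      𝔼 σ : Perm (Fin n), ((a ∘ σ) ⬝ᵥ A *ᵥ (a ∘ σ)) ^ 2 =
        (1 - η * ((n - 1) ^ 2 / n)) / (n ^ 2 - 1) * (A.trace ^ 2 + 2 * ∑ k, ∑ l, A k l ^ 2)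
          + η * ∑ k, A k k ^ 2 := by
  obtain ⟨f₁, f₂, f₃, f₄, γ, η, hη, hrepr⟩ := exists_fourthMoment_eq hn ha.sq_le
  have hmoment : ∀ B : Matrix (Fin n) (Fin n) ℝ, B.IsSymm → B *ᵥ 1 = 0 →
      𝔼 σ : Perm (Fin n), ((a ∘ σ) ⬝ᵥ B *ᵥ (a ∘ σ)) ^ 2 =
        γ * (B.trace ^ 2 + 2 * ∑ k, ∑ l, B k l ^ 2) + η * ∑ k, B k k ^ 2 := by
    intro B hs hB
    rw [expect_sq_quadForm_eq_sum]
    simp only [hrepr]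
    exact sum_contraction_eq hs hB f₁ f₂ f₃ f₄ γ η
  refine ⟨η, hη, fun A hs hA => ?_⟩
  have hγ := hmoment (centering n) isSymm_centering centering_mulVec_one
  have hn0 : n ≠ 0 := by omega
  have hnR : (4 : ℝ) ≤ n := by exact_mod_cast hn
  simp only [ha.comp_dotProduct_centering, one_pow, Fintype.expect_const, trace_centering hn0,
    isCenteredProj_centering.sum_sq, centering_apply_self, sum_const, card_univ, Fintype.card_fin,
    nsmul_eq_mul] at hγ
  have hγ' : γ = (1 - η * ((n - 1) ^ 2 / n)) / (n ^ 2 - 1) := by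
    rw [eq_div_iff (by nlinarith)]
    have : n * ((n - 1) / n) ^ 2 = (n - 1 : ℝ) ^ 2 / n := by field_simp
    rw [this] at hγ
    linear_combination -hγ
  rw [hmoment A hs hA, hγ']

end Moments

section SwapIncrements

variable {n : ℕ} {C : ℝ}

theorem comp_swap_eq (u : Fin n → ℝ) (k l : Fin n) :
    u ∘ swap k l = u + (u l - u k) • (Pi.single k 1 - Pi.single l 1) := by
  ext i
  by_cases hik : i = k <;> by_cases hil : i = l <;>
    simp_all [swap_apply_def]

theorem sum_sum_sub_sq_le (v : Fin n → ℝ) :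
    ∑ k, ∑ l, (v k - v l) ^ 2 ≤ 2 * n * ∑ k, v k ^ 2 := by
  have : ∑ k, ∑ l, (v k - v l) ^ 2 = 2 * n * ∑ k, v k ^ 2 - 2 * (∑ k, v k) ^ 2 := by
    simp only [sub_sq, sum_add_distrib, sum_sub_distrib, ← mul_sum, ← sum_mul, sum_const, card_univ,
      Fintype.card_fin, nsmul_eq_mul]
    ring
  nlinarith [sq_nonneg (∑ k, v k)]

namespace IsScore

variable {a : Fin n → ℝ}

theorem sub_sq_le (ha : IsScore C a) (i j : Fin n) : (a i - a j) ^ 2 ≤ 4 * C / n := by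
  have := ha.sq_le i
  have := ha.sq_le j
  have : 4 * C / n = 4 * (C / n) := by ring
  nlinarith [sq_nonneg (a i + a j)]

theorem pos (ha : IsScore C a) : 0 < n := by
  rcases Nat.eq_zero_or_pos n with rfl | hn
  · simpa using ha.sum_sq_eq_one
  · exact hn

theorem one_le_const (ha : IsScore C a) : 1 ≤ C := by
  have hn : (n : ℝ) ≠ 0 := by exact_mod_cast ha.pos.ne'
  calc (1 : ℝ) = ∑ i, a i ^ 2 := ha.sum_sq_eq_one.symm
    _ ≤ ∑ _i : Fin n, C / n := sum_le_sum fun i _ => ha.sq_le i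
    _ = C := by simp [mul_div_cancel₀ _ hn]

theorem comp (ha : IsScore C a) (σ : Perm (Fin n)) : IsScore C (a ∘ σ) :=
  ⟨(Equiv.sum_comp σ a).trans ha.sum_eq_zero,
    (Equiv.sum_comp σ fun i => a i ^ 2).trans ha.sum_sq_eq_one, fun i => ha.sq_le (σ i)⟩

theorem dotProduct_self (ha : IsScore C a) : a ⬝ᵥ a = 1 := by
  rw [← ha.sum_sq_eq_one]
  simp only [dotProduct, sq]

theorem sum_swap_dotProduct_sub_sq_le (ha : IsScore C a) (r : Fin n → ℝ) :
    ∑ k, ∑ l, (r ⬝ᵥ (a ∘ swap k l) - r ⬝ᵥ a) ^ 2 ≤ 8 * C * ∑ k, r k ^ 2 := by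
  have hterm : ∀ k l, (r ⬝ᵥ (a ∘ swap k l) - r ⬝ᵥ a) ^ 2 ≤ 4 * C / n * (r k - r l) ^ 2 := by
    intro k l
    rw [comp_swap_eq, dotProduct_add, dotProduct_smul, dotProduct_sub, dotProduct_single,
      dotProduct_single, mul_one, mul_one, add_sub_cancel_left, smul_eq_mul, mul_pow]
    exact mul_le_mul_of_nonneg_right (ha.sub_sq_le l k) (sq_nonneg _)
  have hn : (0 : ℝ) < n := by exact_mod_cast ha.pos
  have hC := ha.one_le_const
  calc _ ≤ ∑ k, ∑ l, 4 * C / n * (r k - r l) ^ 2 :=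
        sum_le_sum fun k _ => sum_le_sum fun l _ => hterm k l
    _ = 4 * C / n * ∑ k, ∑ l, (r k - r l) ^ 2 := by simp only [mul_sum]
    _ ≤ 4 * C / n * (2 * n * ∑ k, r k ^ 2) := by gcongr; exact sum_sum_sub_sq_le r
    _ = 8 * C * ∑ k, r k ^ 2 := by field_simp; ring

theorem quadForm_comp_swap_sub_sq_le (ha : IsScore C a) {P : Matrix (Fin n) (Fin n) ℝ}
    (hP : IsCenteredProj P) (k l : Fin n) :
    ((a ∘ swap k l) ⬝ᵥ P *ᵥ (a ∘ swap k l) - a ⬝ᵥ P *ᵥ a) ^ 2 ≤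
      4 * C / n * (8 * ((P *ᵥ a) k - (P *ᵥ a) l) ^ 2 + 8 * (a k - a l) ^ 2) := by
  set w : Fin n → ℝ := Pi.single k 1 - Pi.single l 1 with hw
  have hexp : (a ∘ swap k l) ⬝ᵥ P *ᵥ (a ∘ swap k l) - a ⬝ᵥ P *ᵥ a =
      2 * (a l - a k) * ((P *ᵥ a) k - (P *ᵥ a) l) + (a l - a k) ^ 2 * (w ⬝ᵥ P *ᵥ w) := by
    rw [comp_swap_eq, ← hw]
    have : a ⬝ᵥ P *ᵥ w = (P *ᵥ a) ⬝ᵥ w := by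
      rw [Matrix.dotProduct_mulVec, ← Matrix.mulVec_transpose, hP.isSymm.eq]
    have hwa : w ⬝ᵥ P *ᵥ a = (P *ᵥ a) k - (P *ᵥ a) l := by
      simp [hw, sub_dotProduct]
    simp only [Matrix.mulVec_add, Matrix.mulVec_smul, add_dotProduct, dotProduct_add,
      smul_dotProduct, dotProduct_smul, smul_eq_mul, this, dotProduct_comm (P *ᵥ a) w, hwa]
    ring
  have hw0 := hP.dotProduct_mulVec_self_nonneg w
  have hw2 : w ⬝ᵥ P *ᵥ w ≤ 2 := by
    refine (hP.dotProduct_mulVec_self_le w).trans ?_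
    simp only [hw, sub_dotProduct, dotProduct_sub, single_dotProduct, Pi.single_apply]
    split_ifs <;> norm_num
  have hd : (a l - a k) ^ 2 ≤ 4 * C / n := ha.sub_sq_le l k
  have hB : 0 ≤ 4 * C / n := (sq_nonneg _).trans hd
  calc _ ≤ (a l - a k) ^ 2 * (8 * ((P *ᵥ a) k - (P *ᵥ a) l) ^ 2)
        + (a l - a k) ^ 2 * (2 * (w ⬝ᵥ P *ᵥ w) ^ 2 * (a l - a k) ^ 2) := by
        rw [hexp]
        linarith [sq_nonneg (2 * (a l - a k) * ((P *ᵥ a) k - (P *ᵥ a) l)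
          - (a l - a k) ^ 2 * (w ⬝ᵥ P *ᵥ w))]
    _ ≤ 4 * C / n * (8 * ((P *ᵥ a) k - (P *ᵥ a) l) ^ 2)
        + 4 * C / n * (2 * 2 ^ 2 * (a l - a k) ^ 2) := by gcongr
    _ = _ := by ring

theorem sum_swap_quadForm_sub_sq_le (ha : IsScore C a) {P : Matrix (Fin n) (Fin n) ℝ}
    (hP : IsCenteredProj P) :
    ∑ k, ∑ l, ((a ∘ swap k l) ⬝ᵥ P *ᵥ (a ∘ swap k l) - a ⬝ᵥ P *ᵥ a) ^ 2 ≤ 128 * C := by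
  have hn : (0 : ℝ) < n := by exact_mod_cast ha.pos
  have hC := ha.one_le_const
  have hPa : ∑ k, (P *ᵥ a) k ^ 2 ≤ 1 :=
    (hP.sum_mulVec_sq a).trans_le ((hP.dotProduct_mulVec_self_le a).trans ha.dotProduct_self.le)
  have hsum : ∑ k, ∑ l, (8 * ((P *ᵥ a) k - (P *ᵥ a) l) ^ 2 + 8 * (a k - a l) ^ 2) ≤
      32 * (n : ℝ) := by
    simp only [sum_add_distrib, ← mul_sum]
    have h₁ := sum_sum_sub_sq_le (P *ᵥ a)
    have h₂ := sum_sum_sub_sq_le a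
    rw [ha.sum_sq_eq_one] at h₂
    nlinarith
  calc _ ≤ ∑ k, ∑ l, 4 * C / n * (8 * ((P *ᵥ a) k - (P *ᵥ a) l) ^ 2 + 8 * (a k - a l) ^ 2) :=
        sum_le_sum fun k _ => sum_le_sum fun l _ => ha.quadForm_comp_swap_sub_sq_le hP k l
    _ = 4 * C / n * ∑ k, ∑ l, (8 * ((P *ᵥ a) k - (P *ᵥ a) l) ^ 2 + 8 * (a k - a l) ^ 2) := by
        simp only [mul_sum]
    _ ≤ 4 * C / n * (32 * n) := by gcongr
    _ = 128 * C := by field_simp; ring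

end IsScore

end SwapIncrements

section NormalizedForms

variable {n : ℕ} {C δ : ℝ} {a : Fin n → ℝ} {P : Matrix (Fin n) (Fin n) ℝ}

/-- The relative deviation of the quadratic form of `P` at `u` from `P.trace / (n - 1)`, which is
its mean when `u` is a randomly permuted score vector. -/
noncomputable def relDev (P : Matrix (Fin n) (Fin n) ℝ) (u : Fin n → ℝ) : ℝ :=
  (n - 1) / P.trace * (u ⬝ᵥ P *ᵥ u) - 1

/-- The spread of the diagonal of `P` around its mean, which measures by how much the second moment
of `relDev P` deviates from that for a uniformly distributed unit vector. -/
noncomputable def diagDev (P : Matrix (Fin n) (Fin n) ℝ) : ℝ :=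
  ∑ k, (P k k - P.trace / n) ^ 2

/-- The variance of the squared length of the projection of a uniformly distributed unit vector in
dimension `n - 1` to a subspace of dimension `m`, relative to its squared mean. -/
noncomputable def sphericalVar (n : ℕ) (m : ℝ) : ℝ :=
  2 * (n - 1 - m) / (m * (n + 1))

theorem diagDev_nonneg (P : Matrix (Fin n) (Fin n) ℝ) : 0 ≤ diagDev P :=
  sum_nonneg fun _ _ => sq_nonneg _

theorem diagDev_eq (hn : n ≠ 0) (P : Matrix (Fin n) (Fin n) ℝ) :
    diagDev P = ∑ k, P k k ^ 2 - P.trace ^ 2 / n := by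
  have htr : ∑ k, P k k = P.trace := rfl
  simp only [diagDev, sub_sq, sum_add_distrib, sum_sub_distrib, mul_assoc, ← mul_sum, ← sum_mul,
    htr, sum_const, card_univ, Fintype.card_fin, nsmul_eq_mul]
  field_simp
  ring

theorem expect_relDev (hn : 2 ≤ n) (ha : IsScore C a) (hP : IsCenteredProj P)
    (hm : P.trace ≠ 0) : 𝔼 σ : Perm (Fin n), relDev P (a ∘ σ) = 0 := by
  have hn1 : (n : ℝ) - 1 ≠ 0 := by
    have : (2 : ℝ) ≤ n := by exact_mod_cast hn
    linarith
  simp only [relDev, expect_sub_distrib, ← mul_expect, expect_quadForm hn ha hP.mulVec_one,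
    Fintype.expect_const]
  field_simp
  ring

theorem exists_expect_relDev_sq_eq (hn : 4 ≤ n) (ha : IsScore C a) :
    ∃ η : ℝ, |η| ≤ 26 * (C / n) ^ 2 ∧ ∀ P : Matrix (Fin n) (Fin n) ℝ, IsCenteredProj P →
      P.trace ≠ 0 → 𝔼 σ : Perm (Fin n), relDev P (a ∘ σ) ^ 2 = sphericalVar n P.trace
        + η * (((n - 1) / P.trace) ^ 2 * diagDev P
          - sphericalVar n P.trace * ((n - 1) ^ 2 / n)) := by
  obtain ⟨η, hη, hsq⟩ := exists_expect_sq_quadForm_eq hn ha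
  refine ⟨η, hη, fun P hP hm => ?_⟩
  have hnR : (4 : ℝ) ≤ n := by exact_mod_cast hn
  have hn1 : (n : ℝ) - 1 ≠ 0 := by linarith
  have hexp : ∀ σ : Perm (Fin n), relDev P (a ∘ σ) ^ 2 =
      ((n - 1) / P.trace) ^ 2 * ((a ∘ σ) ⬝ᵥ P *ᵥ (a ∘ σ)) ^ 2
        - 2 * ((n - 1) / P.trace) * ((a ∘ σ) ⬝ᵥ P *ᵥ (a ∘ σ)) + 1 := fun σ => by
    rw [relDev]; ring
  simp only [hexp, expect_add_distrib, expect_sub_distrib, ← mul_expect, Fintype.expect_const,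
    hsq P hP.isSymm hP.mulVec_one, expect_quadForm (by omega : 2 ≤ n) ha hP.mulVec_one, hP.sum_sq,
    diagDev_eq (by omega : n ≠ 0), sphericalVar]
  have : (n : ℝ) ^ 2 - 1 = (n - 1) * (n + 1) := by ring
  rw [this]
  field_simp
  ring

theorem scale_sq_le (hn : 1 ≤ n) (hδ : 0 < δ) {m : ℝ} (hm : δ * n ≤ m) :
    ((n - 1) / m) ^ 2 ≤ 1 / δ ^ 2 := by
  have hn1 : (1 : ℝ) ≤ n := by exact_mod_cast hn
  have hm0 : 0 < m := by nlinarith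
  rw [← one_div_pow]
  refine pow_le_pow_left₀ (div_nonneg (by linarith) hm0.le) ?_ 2
  rw [div_le_div_iff₀ hm0 hδ]
  linarith

theorem abs_sphericalVar_le (hn : 1 ≤ n) (hδ : 0 < δ) {m : ℝ} (hm : δ * n ≤ m) (hmn : m ≤ n) :
    |sphericalVar n m| ≤ 2 / (δ * n) := by
  have hn1 : (1 : ℝ) ≤ n := by exact_mod_cast hn
  have hδn : 0 < δ * n := by positivity
  have hm0 : 0 < m := hδn.trans_le hm
  have hnum : |(n : ℝ) - 1 - m| ≤ n + 1 := abs_le.2 ⟨by linarith, by linarith⟩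
  rw [sphericalVar, abs_div, abs_mul, abs_two, abs_of_pos (by positivity : 0 < m * (n + 1))]
  calc 2 * |(n : ℝ) - 1 - m| / (m * (n + 1)) ≤ 2 * (n + 1) / (δ * n * (n + 1)) := by gcongr
    _ = 2 / (δ * n) := by field_simp

theorem abs_sphericalVar_mul_le (hn : 1 ≤ n) (hδ : 0 < δ) {m : ℝ} (hm : δ * n ≤ m) (hmn : m ≤ n) :
    |sphericalVar n m * ((n - 1) ^ 2 / n)| ≤ 2 / δ := by
  have hn1 : (1 : ℝ) ≤ n := by exact_mod_cast hn
  rw [abs_mul, abs_of_nonneg (by positivity : 0 ≤ ((n : ℝ) - 1) ^ 2 / n)]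
  calc |sphericalVar n m| * (((n : ℝ) - 1) ^ 2 / n) ≤ 2 / (δ * n) * (n ^ 2 / n) := by
        gcongr
        · exact abs_sphericalVar_le hn hδ hm hmn
        · linarith
    _ = 2 / δ := by field_simp

theorem abs_expect_relDev_sq_sub_le (hn : 4 ≤ n) (ha : IsScore C a) (hP : IsCenteredProj P)
    (hδ : 0 < δ) (hm : δ * n ≤ P.trace) :
    |𝔼 σ : Perm (Fin n), relDev P (a ∘ σ) ^ 2 - sphericalVar n P.trace| ≤
      26 * (C / n) ^ 2 * (diagDev P / δ ^ 2 + 2 / δ) := by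
  obtain ⟨η, hη, hsq⟩ := exists_expect_relDev_sq_eq hn ha
  have hm0 : 0 < P.trace := lt_of_lt_of_le (by positivity) hm
  have hdev : |((n - 1) / P.trace) ^ 2 * diagDev P| ≤ diagDev P / δ ^ 2 := by
    rw [abs_of_nonneg (mul_nonneg (sq_nonneg _) (diagDev_nonneg P))]
    exact (mul_le_mul_of_nonneg_right (scale_sq_le (by omega) hδ hm) (diagDev_nonneg P)).trans_eq
      (one_div_mul_eq_div _ _)
  rw [hsq P hP hm0.ne', add_sub_cancel_left, abs_mul]
  exact mul_le_mul hη ((abs_sub _ _).trans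
    (add_le_add hdev (abs_sphericalVar_mul_le (by omega) hδ hm hP.trace_le))) (abs_nonneg _)
    (by positivity)

theorem moments_relDev_le (hn : 2 ≤ n) (ha : IsScore C a) (hP : IsCenteredProj P)
    (hδ : 0 < δ) (hm : δ * n ≤ P.trace) :
    𝔼 σ : Perm (Fin n), relDev P (a ∘ σ) ^ 2 ≤ 64 * C / (δ ^ 2 * n) ∧
      𝔼 σ : Perm (Fin n), relDev P (a ∘ σ) ^ 4 ≤ 5 * (64 * C / (δ ^ 2 * n)) ^ 2 := by
  set c := (n - 1) / P.trace with hc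
  have : (0 : ℝ) < n := by exact_mod_cast ha.pos
  have hn1 : (2 : ℝ) ≤ n := by exact_mod_cast hn
  have hm0 : 0 < P.trace := lt_of_lt_of_le (by positivity) hm
  have hC := ha.one_le_const
  have hc2 : c ^ 2 ≤ 1 / δ ^ 2 := scale_sq_le (by omega) hδ hm
  obtain ⟨h₂, h₄⟩ := central_moments_le_of_sum_swap_sq_le
    (f := fun σ : Perm (Fin n) => (a ∘ σ) ⬝ᵥ P *ᵥ (a ∘ σ)) (D := 128 * C)
    fun σ => (ha.comp σ).sum_swap_quadForm_sub_sq_le hP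
  rw [expect_quadForm hn ha hP.mulVec_one] at h₂ h₄
  have hdev : ∀ σ : Perm (Fin n), relDev P (a ∘ σ) =
      c * ((a ∘ σ) ⬝ᵥ P *ᵥ (a ∘ σ) - P.trace / (n - 1)) := fun σ => by
    have : (n : ℝ) - 1 ≠ 0 := by linarith
    rw [relDev, hc]
    field_simp
  simp only [hdev, mul_pow, ← mul_expect]
  constructor
  · calc _ ≤ 1 / δ ^ 2 * (128 * C / (2 * n)) := by gcongr
      _ = 64 * C / (δ ^ 2 * n) := by field_simp; ring
  · calc _ ≤ (1 / δ ^ 2) ^ 2 * (5 * (128 * C / (2 * n)) ^ 2) := by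
          rw [show c ^ 4 = (c ^ 2) ^ 2 by ring]
          gcongr
      _ = 5 * (64 * C / (δ ^ 2 * n)) ^ 2 := by field_simp; ring

theorem expect_abs_relDev_le (hn : 2 ≤ n) (ha : IsScore C a) (hP : IsCenteredProj P)
    (hδ : 0 < δ) (hm : δ * n ≤ P.trace) :
    𝔼 σ : Perm (Fin n), |relDev P (a ∘ σ)| ≤ √(64 * C / (δ ^ 2 * n)) := by
  refine Real.le_sqrt_of_sq_le ((sq_expect_le _).trans ?_)
  simpa only [sq_abs] using (moments_relDev_le hn ha hP hδ hm).1

theorem expect_abs_relDev_pow_three_le (hn : 2 ≤ n) (ha : IsScore C a) (hP : IsCenteredProj P)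
    (hδ : 0 < δ) (hm : δ * n ≤ P.trace) :
    𝔼 σ : Perm (Fin n), |relDev P (a ∘ σ)| ^ 3 ≤ 3 * √(64 * C / (δ ^ 2 * n)) ^ 3 := by
  obtain ⟨h₂, h₄⟩ := moments_relDev_le hn ha hP hδ hm
  have : (0 : ℝ) < n := by exact_mod_cast ha.pos
  have hC := ha.one_le_const
  set s := √(64 * C / (δ ^ 2 * n)) with hs
  have hs0 : 0 < s := Real.sqrt_pos.2 (by positivity)
  have hs2 : 64 * C / (δ ^ 2 * n) = s ^ 2 := (Real.sq_sqrt (by positivity)).symm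
  rw [hs2] at h₂ h₄
  have hyoung : ∀ x : ℝ, |x| ^ 3 ≤ s / 2 * x ^ 2 + 1 / (2 * s) * x ^ 4 := fun x => by
    have : s / 2 * x ^ 2 + 1 / (2 * s) * x ^ 4 - |x| ^ 3 = x ^ 2 * (s - |x|) ^ 2 / (2 * s) := by
      rw [show x ^ 4 = (x ^ 2) ^ 2 by ring, ← sq_abs x]
      field_simp
      ring
    have : 0 ≤ x ^ 2 * (s - |x|) ^ 2 / (2 * s) := by positivity
    linarith
  calc _ ≤ 𝔼 σ : Perm (Fin n), (s / 2 * relDev P (a ∘ σ) ^ 2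
        + 1 / (2 * s) * relDev P (a ∘ σ) ^ 4) := expect_le_expect fun σ _ => hyoung _
    _ ≤ s / 2 * s ^ 2 + 1 / (2 * s) * (5 * (s ^ 2) ^ 2) := by
        rw [expect_add_distrib, ← mul_expect, ← mul_expect]
        gcongr
    _ = 3 * s ^ 3 := by field_simp; ring

end NormalizedForms

section Downdate

variable {n : ℕ} {C δ : ℝ} {a w : Fin n → ℝ} {P : Matrix (Fin n) (Fin n) ℝ}

/-- The projection to the orthogonal complement of `P *ᵥ w` in the range of the projection `P`. If
`P *ᵥ w = 0` the coefficient is `0⁻¹ = 0` and the value is `P`, as it should be. -/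
noncomputable def downdate (P : Matrix (Fin n) (Fin n) ℝ) (w : Fin n → ℝ) :
    Matrix (Fin n) (Fin n) ℝ :=
  P - (w ⬝ᵥ P *ᵥ w)⁻¹ • Matrix.vecMulVec (P *ᵥ w) (P *ᵥ w)

theorem dotProduct_downdate_mulVec (hs : P.IsSymm) (u v : Fin n → ℝ) :
    u ⬝ᵥ downdate P w *ᵥ v = u ⬝ᵥ P *ᵥ v - (w ⬝ᵥ P *ᵥ w)⁻¹ * (u ⬝ᵥ P *ᵥ w) * (w ⬝ᵥ P *ᵥ v) := by
  have hwv : P *ᵥ w ⬝ᵥ v = w ⬝ᵥ P *ᵥ v := by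
    rw [Matrix.dotProduct_mulVec, ← Matrix.mulVec_transpose, hs.eq]
  rw [downdate, Matrix.sub_mulVec, Matrix.smul_mulVec, Matrix.vecMulVec_mulVec, dotProduct_sub,
    dotProduct_smul, hwv]
  simp only [dotProduct_smul, MulOpposite.smul_eq_mul_unop, MulOpposite.unop_op, smul_eq_mul]
  ring

namespace IsCenteredProj

theorem downdate (hP : IsCenteredProj P) (w : Fin n → ℝ) : IsCenteredProj (downdate P w) where
  isSymm := by
    rw [Matrix.IsSymm, _root_.downdate, Matrix.transpose_sub, Matrix.transpose_smul,
      Matrix.transpose_vecMulVec, hP.isSymm.eq]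
  mul_self := by
    have hPw : P *ᵥ P *ᵥ w = P *ᵥ w := by rw [Matrix.mulVec_mulVec, hP.mul_self]
    have hwP : (P *ᵥ w) ᵥ* P = P *ᵥ w := by rw [← Matrix.mulVec_transpose, hP.isSymm.eq, hPw]
    rcases eq_or_ne (w ⬝ᵥ P *ᵥ w) 0 with hq | hq
    · simp [_root_.downdate, hq, hP.mul_self]
    · rw [_root_.downdate, sub_mul, mul_sub, mul_sub, hP.mul_self, mul_smul_comm, smul_mul_assoc,
        smul_mul_assoc, mul_smul_comm, Matrix.mul_vecMulVec, Matrix.vecMulVec_mul,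
        Matrix.vecMulVec_mul_vecMulVec, hPw, hwP, ← hP.dotProduct_mulVec]
      simp [smul_smul, hq]
  mulVec_one := by
    have hone : P *ᵥ w ⬝ᵥ 1 = 0 := by
      rw [dotProduct_comm, Matrix.dotProduct_mulVec, ← Matrix.mulVec_transpose, hP.isSymm.eq,
        hP.mulVec_one, zero_dotProduct]
    rw [_root_.downdate, Matrix.sub_mulVec, Matrix.smul_mulVec, Matrix.vecMulVec_mulVec, hone,
      hP.mulVec_one]
    simp

theorem trace_downdate (hP : IsCenteredProj P) (hq : w ⬝ᵥ P *ᵥ w ≠ 0) :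
    (_root_.downdate P w).trace = P.trace - 1 := by
  rw [_root_.downdate, Matrix.trace_sub, Matrix.trace_smul, Matrix.trace_vecMulVec,
    ← hP.dotProduct_mulVec, smul_eq_mul, inv_mul_cancel₀ hq]

end IsCenteredProj

theorem downdate_apply_self (k : Fin n) :
    downdate P w k k = P k k - (w ⬝ᵥ P *ᵥ w)⁻¹ * (P *ᵥ w) k ^ 2 := by
  simp [downdate, Matrix.vecMulVec_apply, sq]

theorem diagDev_downdate (hP : IsCenteredProj P) (hn : n ≠ 0) (hq : w ⬝ᵥ P *ᵥ w ≠ 0) :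
    diagDev (downdate P w) = diagDev P + (2 * P.trace - 1) / n
      - 2 * (w ⬝ᵥ P *ᵥ w)⁻¹ * ∑ k, P k k * (P *ᵥ w) k ^ 2
      + (w ⬝ᵥ P *ᵥ w)⁻¹ ^ 2 * ∑ k, (P *ᵥ w) k ^ 4 := by
  have hterm : ∀ k, downdate P w k k ^ 2 = P k k ^ 2
      - 2 * (w ⬝ᵥ P *ᵥ w)⁻¹ * (P k k * (P *ᵥ w) k ^ 2)
      + (w ⬝ᵥ P *ᵥ w)⁻¹ ^ 2 * (P *ᵥ w) k ^ 4 := fun k => by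
    rw [downdate_apply_self]; ring
  simp only [diagDev_eq hn, hP.trace_downdate hq, hterm, sum_add_distrib, sum_sub_distrib,
    ← mul_sum]
  ring

theorem inv_sq_mul_sub_inv_mul_le {c q S F : ℝ} (hq : 0 < q) (hS : 0 ≤ S) (hSq : S ≤ q)
    (hF : 0 ≤ F) (hFq : F ≤ q ^ 2) :
    q⁻¹ ^ 2 * F - 2 * q⁻¹ * S ≤
      2 * |c * q - 1| + 4 * (c * q - 1) ^ 2 + 4 * c ^ 2 * F - 2 * c * S := by
  have hlinear : (c - q⁻¹) * S ≤ |c * q - 1| := by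
    have : (c - q⁻¹) * S = (c * q - 1) * (S / q) := by field_simp
    rw [this]
    refine (le_abs_self _).trans ?_
    rw [abs_mul, abs_of_nonneg (div_nonneg hS hq.le)]
    exact mul_le_of_le_one_right (abs_nonneg _) ((div_le_one hq).2 hSq)
  have hquadratic : q⁻¹ ^ 2 * F ≤ 4 * (c * q - 1) ^ 2 + 4 * c ^ 2 * F := by
    rcases le_total (1 / 2) (c * q) with hcq | hcq
    · have : q⁻¹ ≤ 2 * c := by rw [inv_le_iff_one_le_mul₀ hq]; linarith
      nlinarith [mul_le_mul_of_nonneg_right (pow_le_pow_left₀ (inv_nonneg.2 hq.le) this 2) hF,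
        sq_nonneg (c * q - 1)]
    · have : q⁻¹ ^ 2 * F ≤ 1 := by
        rw [inv_pow, ← div_eq_inv_mul]
        exact (div_le_one (by positivity)).2 hFq
      nlinarith [mul_nonneg (sq_nonneg c) hF]
  linarith

theorem sum_mulVec_pow_four_le (hP : IsCenteredProj P) (w : Fin n → ℝ) :
    ∑ k, (P *ᵥ w) k ^ 4 ≤ (w ⬝ᵥ P *ᵥ w) ^ 2 := by
  rw [← hP.sum_mulVec_sq]
  calc _ ≤ ∑ k, (∑ l, (P *ᵥ w) l ^ 2) * (P *ᵥ w) k ^ 2 := sum_le_sum fun k _ => by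
        rw [show (P *ᵥ w) k ^ 4 = (P *ᵥ w) k ^ 2 * (P *ᵥ w) k ^ 2 by ring]
        gcongr
        exact single_le_sum (f := fun l => (P *ᵥ w) l ^ 2) (fun _ _ => sq_nonneg _) (mem_univ k)
    _ = _ := by rw [← mul_sum, sq]

theorem diagDev_downdate_le (hP : IsCenteredProj P) (hm : 1 ≤ P.trace) (w : Fin n → ℝ) :
    diagDev (downdate P w) ≤ diagDev P
      + ((2 * P.trace - 1) / n - 2 * ((n - 1) / P.trace) * ∑ k, P k k * (P *ᵥ w) k ^ 2)
      + (2 * |relDev P w| + 4 * relDev P w ^ 2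
        + 4 * ((n - 1) / P.trace) ^ 2 * ∑ k, (P *ᵥ w) k ^ 4) := by
  have hn : (0 : ℝ) < n := by linarith [hP.trace_le]
  have hS : 0 ≤ ∑ k, P k k * (P *ᵥ w) k ^ 2 :=
    sum_nonneg fun k _ => mul_nonneg (hP.apply_self_nonneg k) (sq_nonneg _)
  have hSq : ∑ k, P k k * (P *ᵥ w) k ^ 2 ≤ w ⬝ᵥ P *ᵥ w := by
    rw [← hP.sum_mulVec_sq]
    exact sum_le_sum fun k _ => mul_le_of_le_one_left (sq_nonneg _) (hP.apply_self_le_one k)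
  have hF : 0 ≤ ∑ k, (P *ᵥ w) k ^ 4 := sum_nonneg fun k _ => by positivity
  have hFq := sum_mulVec_pow_four_le hP w
  rcases (hP.dotProduct_mulVec_self_nonneg w).eq_or_lt' with hq | hq
  · have hmain : 0 ≤ (2 * P.trace - 1) / n := div_nonneg (by linarith) hn.le
    have herr : 0 ≤ 2 * |relDev P w| + 4 * relDev P w ^ 2
        + 4 * ((n - 1) / P.trace) ^ 2 * ∑ k, (P *ᵥ w) k ^ 4 := by positivity
    rw [downdate, hq, inv_zero, zero_smul, sub_zero, le_antisymm (hq ▸ hSq) hS, mul_zero]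
    linarith
  · rw [diagDev_downdate hP (by exact_mod_cast hn.ne') hq.ne']
    have := inv_sq_mul_sub_inv_mul_le (c := (n - 1) / P.trace) hq hS hSq hF hFq
    rw [relDev]
    linarith

theorem expect_sum_apply_self_mul (hn : 2 ≤ n) (ha : IsScore C a) (hP : IsCenteredProj P) :
    𝔼 σ : Perm (Fin n), ∑ k, P k k * (P *ᵥ (a ∘ σ)) k ^ 2 = (∑ k, P k k ^ 2) / (n - 1) := by
  let A := P * Matrix.diagonal P.diag * P
  have hA : A *ᵥ 1 = 0 := by
    simp only [A, ← Matrix.mulVec_mulVec, hP.mulVec_one, Matrix.mulVec_zero]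
  have htrace : A.trace = ∑ k, P k k ^ 2 := by
    simp only [A, Matrix.trace_mul_comm (P * _) P, ← mul_assoc, hP.mul_self]
    simp [Matrix.trace, sq]
  rw [← htrace, ← expect_quadForm hn ha hA]
  refine expect_congr rfl fun σ _ => ?_
  simp only [A, ← Matrix.mulVec_mulVec]
  rw [Matrix.dotProduct_mulVec _ P, ← Matrix.mulVec_transpose, hP.isSymm.eq]
  simp only [dotProduct, Matrix.mulVec_diagonal, Matrix.diag_apply]
  exact sum_congr rfl fun k _ => by ring

theorem expect_dotProduct_comp (ha : IsScore C a) (r : Fin n → ℝ) :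
    𝔼 σ : Perm (Fin n), r ⬝ᵥ (a ∘ σ) = 0 := by
  have hentry : ∀ k, 𝔼 σ : Perm (Fin n), a (σ k) = 0 := by
    intro k
    have hconst : ∀ j, 𝔼 σ : Perm (Fin n), a (σ j) = 𝔼 σ : Perm (Fin n), a (σ k) := fun j => by
      simpa using expect_mul_right (fun σ => a (σ k)) (swap k j)
    have hsum : ∑ j, 𝔼 σ : Perm (Fin n), a (σ j) = 0 := by
      rw [← expect_sum_comm]
      exact expect_eq_zero fun σ _ => (ha.comp σ).sum_eq_zero
    simpa [hconst, ha.pos.ne'] using hsum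
  simp only [dotProduct, expect_sum_comm, ← mul_expect, Function.comp_apply, hentry, mul_zero,
    sum_const_zero]

theorem expect_dotProduct_comp_pow_four_le (ha : IsScore C a) (r : Fin n → ℝ) :
    𝔼 σ : Perm (Fin n), (r ⬝ᵥ (a ∘ σ)) ^ 4 ≤ 5 * (4 * C / n * ∑ k, r k ^ 2) ^ 2 := by
  have := (central_moments_le_of_sum_swap_sq_le (f := fun σ : Perm (Fin n) => r ⬝ᵥ (a ∘ σ))
    fun σ => (ha.comp σ).sum_swap_dotProduct_sub_sq_le r).2
  simp only [expect_dotProduct_comp ha, sub_zero] at this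
  exact this.trans_eq (by ring)

theorem expect_sum_mulVec_pow_four_le (ha : IsScore C a) (hP : IsCenteredProj P) :
    𝔼 σ : Perm (Fin n), ∑ k, (P *ᵥ (a ∘ σ)) k ^ 4 ≤ 80 * C ^ 2 / n := by
  have hn : (0 : ℝ) < n := by exact_mod_cast ha.pos
  calc _ ≤ ∑ k, 5 * (4 * C / n * P k k) ^ 2 := by
        rw [expect_sum_comm]
        refine sum_le_sum fun k _ => ?_
        rw [hP.apply_self k]
        exact expect_dotProduct_comp_pow_four_le ha (P k)
    _ = 80 * C ^ 2 / n ^ 2 * ∑ k, P k k ^ 2 := by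
        rw [mul_sum]
        exact sum_congr rfl fun k _ => by ring
    _ ≤ 80 * C ^ 2 / n ^ 2 * n := by
        gcongr
        exact hP.sum_apply_self_sq_le.trans hP.trace_le
    _ = 80 * C ^ 2 / n := by field_simp

theorem expect_diagDev_downdate_le (hn : 2 ≤ n) (ha : IsScore C a) (hP : IsCenteredProj P)
    (hδ : 0 < δ) (hm : δ * n ≤ P.trace) (hm1 : 1 ≤ P.trace) :
    𝔼 σ : Perm (Fin n), diagDev (downdate P (a ∘ σ)) ≤ diagDev P
      + (2 * √(64 * C / (δ ^ 2 * n)) + 4 * (64 * C / (δ ^ 2 * n))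
        + 4 * (1 / δ ^ 2) * (80 * C ^ 2 / n)) := by
  have hn2 : (2 : ℝ) ≤ n := by exact_mod_cast hn
  have hmain : (2 * P.trace - 1) / n
      - 2 * ((n - 1) / P.trace) * ((∑ k, P k k ^ 2) / (n - 1)) ≤ 0 := by
    have hcs : P.trace ^ 2 / n ≤ ∑ k, P k k ^ 2 :=
      sub_nonneg.1 ((diagDev_nonneg P).trans_eq (diagDev_eq (by omega) P))
    have : (n : ℝ) - 1 ≠ 0 := by linarith
    calc _ = (2 * P.trace - 1) / n - 2 / P.trace * ∑ k, P k k ^ 2 := by field_simp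
      _ ≤ (2 * P.trace - 1) / n - 2 / P.trace * (P.trace ^ 2 / n) := by gcongr
      _ = -(1 / n) := by field_simp; ring
      _ ≤ 0 := by simp
  calc _ ≤ 𝔼 σ : Perm (Fin n), (diagDev P + ((2 * P.trace - 1) / n
          - 2 * ((n - 1) / P.trace) * ∑ k, P k k * (P *ᵥ (a ∘ σ)) k ^ 2)
          + (2 * |relDev P (a ∘ σ)| + 4 * relDev P (a ∘ σ) ^ 2
          + 4 * ((n - 1) / P.trace) ^ 2 * ∑ k, (P *ᵥ (a ∘ σ)) k ^ 4)) :=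
        expect_le_expect fun σ _ => diagDev_downdate_le hP hm1 (a ∘ σ)
    _ = diagDev P + ((2 * P.trace - 1) / n
          - 2 * ((n - 1) / P.trace) * ((∑ k, P k k ^ 2) / (n - 1)))
          + (2 * 𝔼 σ : Perm (Fin n), |relDev P (a ∘ σ)|
          + 4 * 𝔼 σ : Perm (Fin n), relDev P (a ∘ σ) ^ 2
          + 4 * ((n - 1) / P.trace) ^ 2 * 𝔼 σ : Perm (Fin n), ∑ k, (P *ᵥ (a ∘ σ)) k ^ 4) := by
        simp only [expect_add_distrib, expect_sub_distrib, ← mul_expect, Fintype.expect_const,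
          expect_sum_apply_self_mul hn ha hP]
    _ ≤ _ := by
        gcongr
        · linarith
        · exact expect_abs_relDev_le hn ha hP hδ hm
        · exact (moments_relDev_le hn ha hP hδ hm).1
        · exact scale_sq_le (by omega) hδ hm
        · exact expect_sum_mulVec_pow_four_le ha hP

end Downdate

/-! ### Gram determinants -/

section GramDeterminants

theorem det_eq_mul_det_schur {K : Type*} [Field K] {k : ℕ}
    (M : Matrix (Fin (k + 1)) (Fin (k + 1)) K) (h0 : M 0 0 ≠ 0) :
    M.det = M 0 0 * (Matrix.of fun i j : Fin k =>
      M i.succ j.succ - (M 0 0)⁻¹ * M i.succ 0 * M 0 j.succ).det := by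
  let c : Fin (k + 1) → K := Fin.cons 0 fun i => (M 0 0)⁻¹ * M i.succ 0
  let B : Matrix (Fin (k + 1)) (Fin (k + 1)) K := Matrix.of fun i j => M i j - c i * M 0 j
  have hcol : ∀ i : Fin k, B i.succ 0 = 0 := fun i => by
    simp only [B, c, Matrix.of_apply, Fin.cons_succ]
    field_simp
    ring
  have hdet : M.det = B.det :=
    Matrix.det_eq_of_forall_row_eq_smul_add_const c 0 rfl fun i j => by simp [B, c]
  rw [hdet, Matrix.det_succ_column_zero, Fin.sum_univ_succ]
  simp only [hcol, mul_zero, zero_mul, sum_const_zero, add_zero]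
  simp [B, c, Matrix.submatrix]

variable {n k : ℕ} {P : Matrix (Fin n) (Fin n) ℝ}

/-- The Gram matrix of the vectors `u i` for the bilinear form `(v, w) ↦ v ⬝ᵥ P *ᵥ w`. -/
def formGram (P : Matrix (Fin n) (Fin n) ℝ) (u : Fin k → Fin n → ℝ) : Matrix (Fin k) (Fin k) ℝ :=
  Matrix.of fun i j => u i ⬝ᵥ P *ᵥ u j

theorem IsCenteredProj.mulVec_eq_zero (hP : IsCenteredProj P) {w : Fin n → ℝ}
    (hw : w ⬝ᵥ P *ᵥ w = 0) : P *ᵥ w = 0 :=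
  dotProduct_self_eq_zero.1 ((hP.dotProduct_mulVec w w).symm.trans hw)

theorem det_formGram_succ (hP : IsCenteredProj P) (u : Fin (k + 1) → Fin n → ℝ) :
    (formGram P u).det =
      (u 0 ⬝ᵥ P *ᵥ u 0) * (formGram (downdate P (u 0)) (Fin.tail u)).det := by
  rcases eq_or_ne (u 0 ⬝ᵥ P *ᵥ u 0) 0 with hq | hq
  · rw [hq, zero_mul]
    refine Matrix.det_eq_zero_of_column_eq_zero 0 fun i => ?_
    rw [formGram, Matrix.of_apply, hP.mulVec_eq_zero hq, dotProduct_zero]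
  · rw [det_eq_mul_det_schur (formGram P u) hq]
    simp only [formGram, Matrix.of_apply, dotProduct_downdate_mulVec hP.isSymm, Fin.tail]

end GramDeterminants

/-! ### The Mellin transform -/

section MellinKernel

/-- The character `x ↦ |x| ^ (i t)` of the multiplicative monoid of the reals, with value `0` at
`0`. For `t = 0` it is the indicator of `x ≠ 0`. -/
noncomputable def mellinKernel (t x : ℝ) : ℂ :=
  if x = 0 then 0 else Complex.exp ((t * Real.log x : ℝ) * Complex.I)

/-- The coefficient of `-x ^ 2` in the expansion of `(1 + x) ^ (i t)` at `x = 0`. -/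
noncomputable def mellinCoeff (t : ℝ) : ℂ := (Complex.I * t + t ^ 2) / 2

theorem norm_mellinKernel_le_one (t x : ℝ) : ‖mellinKernel t x‖ ≤ 1 := by
  rw [mellinKernel]
  split_ifs
  · simp
  · rw [Complex.norm_exp_ofReal_mul_I]

theorem mellinKernel_one (t : ℝ) : mellinKernel t 1 = 1 := by simp [mellinKernel]

theorem mellinKernel_mul (t x y : ℝ) :
    mellinKernel t (x * y) = mellinKernel t x * mellinKernel t y := by
  rcases eq_or_ne x 0 with rfl | hx
  · simp [mellinKernel]
  rcases eq_or_ne y 0 with rfl | hy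
  · simp [mellinKernel]
  simp only [mellinKernel, hx, hy, mul_eq_zero, or_self, if_false]
  rw [← Complex.exp_add, Real.log_mul hx hy]
  congr 1
  push_cast
  ring

theorem abs_log_one_add_sub_add_le {x : ℝ} (hx : |x| ≤ 1 / 2) :
    |Real.log (1 + x) - x + x ^ 2 / 2| ≤ 2 * |x| ^ 3 := by
  have hseries := Real.abs_log_sub_add_sum_range_le (x := -x) (by rw [abs_neg]; linarith) 2
  simp only [sum_range_succ, sum_range_zero, abs_neg, sub_neg_eq_add] at hseries
  norm_num at hseries
  calc |Real.log (1 + x) - x + x ^ 2 / 2| = |-x + x ^ 2 / 2 + Real.log (1 + x)| := by ring_nf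
    _ ≤ |x| ^ 3 / (1 - |x|) := hseries
    _ ≤ 2 * |x| ^ 3 := by
        rw [div_le_iff₀ (by linarith)]
        nlinarith [pow_nonneg (abs_nonneg x) 3]

theorem abs_log_one_add_sub_le {x : ℝ} (hx : |x| ≤ 1 / 2) :
    |Real.log (1 + x) - x| ≤ 3 / 2 * |x| ^ 2 := by
  have hlog := abs_log_one_add_sub_add_le hx
  have hcube : |x| ^ 3 ≤ |x| ^ 2 / 2 := by nlinarith [sq_nonneg |x|]
  calc |Real.log (1 + x) - x| = |Real.log (1 + x) - x + x ^ 2 / 2 - x ^ 2 / 2| := by ring_nf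
    _ ≤ |Real.log (1 + x) - x + x ^ 2 / 2| + |x ^ 2 / 2| := abs_sub _ _
    _ = |Real.log (1 + x) - x + x ^ 2 / 2| + |x| ^ 2 / 2 := by rw [abs_div, abs_pow, abs_two]
    _ ≤ 3 / 2 * |x| ^ 2 := by linarith

theorem abs_log_one_add_le {x : ℝ} (hx : |x| ≤ 1 / 2) : |Real.log (1 + x)| ≤ 2 * |x| :=
  calc |Real.log (1 + x)| ≤ |Real.log (1 + x) - x| + |x| := by
        simpa using abs_add_le (Real.log (1 + x) - x) x
    _ ≤ 2 * |x| := by nlinarith [abs_log_one_add_sub_le hx, abs_nonneg x]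

theorem norm_exp_mul_I_sub_le (θ : ℝ) :
    ‖Complex.exp (θ * Complex.I) - (1 + θ * Complex.I - θ ^ 2 / 2)‖ ≤
      |θ| ^ 3 * Real.exp |θ| := by
  have hsum : ∑ m ∈ range 3, (θ * Complex.I : ℂ) ^ m / (m.factorial : ℂ) =
      1 + θ * Complex.I - θ ^ 2 / 2 := by
    simp only [sum_range_succ, sum_range_zero, Nat.factorial, mul_pow, Complex.I_sq]
    push_cast
    ring
  have hnorm : ‖(θ : ℂ) * Complex.I‖ = |θ| := by simp
  simpa only [hsum, hnorm] using Complex.norm_exp_sub_sum_le_norm_mul_exp (θ * Complex.I) 3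

theorem norm_mellinKernel_one_add_sub_le_of_abs_le (t : ℝ) {x : ℝ} (hx : |x| ≤ 1 / 2) :
    ‖mellinKernel t (1 + x) - (1 + Complex.I * t * x - mellinCoeff t * x ^ 2)‖ ≤
      (8 * |t| ^ 3 * Real.exp |t| + 2 * |t| + 9 / 4 * t ^ 2) * |x| ^ 3 := by
  have hx1 : 0 < 1 + x := by linarith [(abs_le.1 hx).1]
  rw [mellinKernel, if_neg hx1.ne']
  have hL1 := abs_log_one_add_le hx
  have hL2 := abs_log_one_add_sub_le hx
  have hL3 := abs_log_one_add_sub_add_le hx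
  set L := Real.log (1 + x)
  have hLt : |t| * (2 * |x|) ≤ |t| := by nlinarith [abs_nonneg t]
  have hexp : ‖Complex.exp ((t * L : ℝ) * Complex.I) -
      (1 + (t * L : ℝ) * Complex.I - (t * L : ℝ) ^ 2 / 2)‖ ≤
      8 * |t| ^ 3 * Real.exp |t| * |x| ^ 3 :=
    calc _ ≤ |t * L| ^ 3 * Real.exp |t * L| := norm_exp_mul_I_sub_le _
      _ ≤ (|t| * (2 * |x|)) ^ 3 * Real.exp |t| := by
          rw [abs_mul]
          gcongr
          exact (mul_le_mul_of_nonneg_left hL1 (abs_nonneg t)).trans hLt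
      _ = _ := by ring
  have hlin : ‖Complex.I * t * ((L - x + x ^ 2 / 2 : ℝ) : ℂ)‖ ≤ 2 * |t| * |x| ^ 3 := by
    rw [norm_mul, norm_mul, Complex.norm_I, one_mul, Complex.norm_real, Complex.norm_real,
      Real.norm_eq_abs, Real.norm_eq_abs]
    nlinarith [abs_nonneg t]
  have hquad : ‖((t ^ 2 / 2 * ((L - x) * (L + x)) : ℝ) : ℂ)‖ ≤ 9 / 4 * t ^ 2 * |x| ^ 3 := by
    have hsum : |L + x| ≤ 3 * |x| := (abs_add_le _ _).trans (by linarith)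
    rw [Complex.norm_real, Real.norm_eq_abs, abs_mul, abs_mul, abs_of_nonneg (by positivity)]
    calc t ^ 2 / 2 * (|L - x| * |L + x|) ≤ t ^ 2 / 2 * (3 / 2 * |x| ^ 2 * (3 * |x|)) := by gcongr
      _ = _ := by ring
  have hsplit : Complex.exp ((t * L : ℝ) * Complex.I) -
      (1 + Complex.I * t * x - mellinCoeff t * x ^ 2) =
      (Complex.exp ((t * L : ℝ) * Complex.I) -
        (1 + (t * L : ℝ) * Complex.I - (t * L : ℝ) ^ 2 / 2)) +
      (Complex.I * t * ((L - x + x ^ 2 / 2 : ℝ) : ℂ) -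
        ((t ^ 2 / 2 * ((L - x) * (L + x)) : ℝ) : ℂ)) := by
    rw [mellinCoeff]
    push_cast
    ring
  rw [hsplit, add_mul, add_mul, add_assoc]
  exact (norm_add_le _ _).trans (add_le_add hexp ((norm_sub_le _ _).trans (add_le_add hlin hquad)))

theorem norm_mellinKernel_one_add_sub_le_of_le_abs (t : ℝ) {x : ℝ} (hx : 1 / 2 ≤ |x|) :
    ‖mellinKernel t (1 + x) - (1 + Complex.I * t * x - mellinCoeff t * x ^ 2)‖ ≤
      (16 + 4 * |t| + 2 * ‖mellinCoeff t‖) * |x| ^ 3 := by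
  have hsq : |x| ^ 2 ≤ 2 * |x| ^ 3 := by nlinarith [sq_nonneg |x|]
  have hlin : |x| ≤ 4 * |x| ^ 3 := by nlinarith [sq_nonneg |x|]
  have : 1 ≤ 8 * |x| ^ 3 := by nlinarith [sq_nonneg |x|]
  calc _ ≤ ‖mellinKernel t (1 + x)‖ + (‖(1 : ℂ)‖ + ‖Complex.I * t * x‖ + ‖mellinCoeff t * x ^ 2‖) :=
        (norm_sub_le _ _).trans (add_le_add_right ((norm_sub_le _ _).trans
          (add_le_add_left (norm_add_le _ _) _)) _)
    _ ≤ 1 + (1 + |t| * |x| + ‖mellinCoeff t‖ * |x| ^ 2) := by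
        simp only [norm_mul, norm_pow, Complex.norm_I, Complex.norm_real, Real.norm_eq_abs,
          norm_one, one_mul]
        linarith [norm_mellinKernel_le_one t (1 + x)]
    _ ≤ 1 + (1 + |t| * (4 * |x| ^ 3) + ‖mellinCoeff t‖ * (2 * |x| ^ 3)) := by gcongr
    _ ≤ _ := by linarith

theorem exists_norm_mellinKernel_one_add_sub_le (t : ℝ) : ∃ T : ℝ, 0 ≤ T ∧ ∀ x : ℝ,
    ‖mellinKernel t (1 + x) - (1 + Complex.I * t * x - mellinCoeff t * x ^ 2)‖ ≤ T * |x| ^ 3 := by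
  refine ⟨max (8 * |t| ^ 3 * Real.exp |t| + 2 * |t| + 9 / 4 * t ^ 2)
    (16 + 4 * |t| + 2 * ‖mellinCoeff t‖), le_max_of_le_right (by positivity), fun x => ?_⟩
  rcases le_total |x| (1 / 2) with hx | hx
  · exact (norm_mellinKernel_one_add_sub_le_of_abs_le t hx).trans
      (mul_le_mul_of_nonneg_right (le_max_left _ _) (by positivity))
  · exact (norm_mellinKernel_one_add_sub_le_of_le_abs t hx).trans
      (mul_le_mul_of_nonneg_right (le_max_right _ _) (by positivity))

theorem expect_quadratic_relDev {n : ℕ} {C : ℝ} {a : Fin n → ℝ} {P : Matrix (Fin n) (Fin n) ℝ}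
    (hn : 2 ≤ n) (ha : IsScore C a) (hP : IsCenteredProj P) (hm : P.trace ≠ 0) (b c : ℂ) :
    𝔼 σ : Perm (Fin n), (1 + b * (relDev P (a ∘ σ) : ℂ) - c * (relDev P (a ∘ σ) : ℂ) ^ 2) =
      1 - c * ((𝔼 σ : Perm (Fin n), relDev P (a ∘ σ) ^ 2 : ℝ) : ℂ) := by
  have hmean : 𝔼 σ : Perm (Fin n), (relDev P (a ∘ σ) : ℂ) = 0 := by
    simpa using congrArg Complex.ofReal (expect_relDev hn ha hP hm)
  have hsq : ((𝔼 σ : Perm (Fin n), relDev P (a ∘ σ) ^ 2 : ℝ) : ℂ) =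
      𝔼 σ : Perm (Fin n), (relDev P (a ∘ σ) : ℂ) ^ 2 := by simp
  rw [expect_sub_distrib, expect_add_distrib, ← mul_expect, ← mul_expect, hmean, hsq,
    Fintype.expect_const, mul_zero, add_zero]

theorem abs_expect_relDev_sq_sub_le_add {n : ℕ} {C δ : ℝ} {a : Fin n → ℝ}
    {P : Matrix (Fin n) (Fin n) ℝ} (hn : 4 ≤ n) (ha : IsScore C a) (hP : IsCenteredProj P)
    (hδ : 0 < δ) (hm : δ * n ≤ P.trace) :
    |𝔼 σ : Perm (Fin n), relDev P (a ∘ σ) ^ 2 - sphericalVar n P.trace| ≤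
      26 * C ^ 2 * (1 / δ ^ 2 + 2 / δ) * (diagDev P / n ^ 2 + 1 / (n * √n)) := by
  have : (4 : ℝ) ≤ n := by exact_mod_cast hn
  have : √(n : ℝ) ≤ n := Real.sqrt_le_self_iff.2 (.inr (by linarith))
  have := diagDev_nonneg P
  calc _ ≤ 26 * (C / n) ^ 2 * (diagDev P / δ ^ 2 + 2 / δ) :=
        abs_expect_relDev_sq_sub_le hn ha hP hδ hm
    _ = 26 * C ^ 2 * (1 / δ ^ 2 * (diagDev P / n ^ 2) + 2 / δ * (1 / (n * n))) := by field_simp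
    _ ≤ 26 * C ^ 2 * ((1 / δ ^ 2 + 2 / δ) * (diagDev P / n ^ 2)
          + (1 / δ ^ 2 + 2 / δ) * (1 / (n * √n))) := by
        gcongr
        · exact le_add_of_nonneg_right (by positivity)
        · exact le_add_of_nonneg_left (by positivity)
    _ = _ := by ring

theorem exists_norm_expect_mellinKernel_sub_le (C : ℝ) {δ : ℝ} (hδ : 0 < δ) (t : ℝ) :
    ∃ A : ℝ, 0 ≤ A ∧ ∀ {n : ℕ} {a : Fin n → ℝ} {P : Matrix (Fin n) (Fin n) ℝ}, 4 ≤ n →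
      IsScore C a → IsCenteredProj P → δ * n ≤ P.trace →
      ‖𝔼 σ : Perm (Fin n), mellinKernel t (1 + relDev P (a ∘ σ)) -
        (1 - mellinCoeff t * sphericalVar n P.trace)‖ ≤
        A * (diagDev P / n ^ 2 + 1 / (n * √n)) := by
  obtain ⟨T, hT, htaylor⟩ := exists_norm_mellinKernel_one_add_sub_le t
  refine ⟨T * (3 * √(64 * C / δ ^ 2) ^ 3) + ‖mellinCoeff t‖ * (26 * C ^ 2 * (1 / δ ^ 2 + 2 / δ)),
    by positivity, fun {n a P} hn ha hP hm => ?_⟩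
  have hn1 : (4 : ℝ) ≤ n := by exact_mod_cast hn
  have hm0 : 0 < P.trace := lt_of_lt_of_le (by positivity) hm
  have hdev := diagDev_nonneg P
  set X : Perm (Fin n) → ℝ := fun σ => relDev P (a ∘ σ)
  have hcubic : ‖𝔼 σ, (mellinKernel t (1 + X σ) -
      (1 + Complex.I * t * (X σ : ℂ) - mellinCoeff t * (X σ : ℂ) ^ 2))‖ ≤
      T * (3 * √(64 * C / δ ^ 2) ^ 3) * (diagDev P / n ^ 2 + 1 / (n * √n)) :=
    calc _ ≤ 𝔼 σ, T * |X σ| ^ 3 :=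
          (RCLike.norm_expect_le (K := ℂ)).trans (expect_le_expect fun σ _ => htaylor _)
      _ ≤ T * (3 * √(64 * C / (δ ^ 2 * n)) ^ 3) := by
          rw [← mul_expect]
          gcongr
          exact expect_abs_relDev_pow_three_le (by omega) ha hP hδ hm
      _ = T * (3 * √(64 * C / δ ^ 2) ^ 3) * (1 / (n * √n)) := by
          rw [← div_div, Real.sqrt_div' _ (by linarith), div_pow,
            show √(n : ℝ) ^ 3 = n * √n by rw [pow_succ, Real.sq_sqrt (by linarith)]]
          ring
      _ ≤ _ := by
          gcongr
          exact le_add_of_nonneg_left (by positivity)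
  have hvar : ‖mellinCoeff t * ((𝔼 σ, X σ ^ 2 - sphericalVar n P.trace : ℝ) : ℂ)‖ ≤
      ‖mellinCoeff t‖ * (26 * C ^ 2 * (1 / δ ^ 2 + 2 / δ)) *
        (diagDev P / n ^ 2 + 1 / (n * √n)) := by
    rw [norm_mul, Complex.norm_real, Real.norm_eq_abs, mul_assoc]
    gcongr
    exact abs_expect_relDev_sq_sub_le_add hn ha hP hδ hm
  have hsplit : 𝔼 σ, mellinKernel t (1 + X σ) - (1 - mellinCoeff t * sphericalVar n P.trace) =
      𝔼 σ, (mellinKernel t (1 + X σ) -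
        (1 + Complex.I * t * (X σ : ℂ) - mellinCoeff t * (X σ : ℂ) ^ 2)) -
      mellinCoeff t * ((𝔼 σ, X σ ^ 2 - sphericalVar n P.trace : ℝ) : ℂ) := by
    rw [expect_sub_distrib, expect_quadratic_relDev (by omega) ha hP hm0.ne']
    push_cast
    ring
  rw [hsplit, add_mul]
  exact (norm_sub_le _ _).trans (add_le_add hcubic hvar)

end MellinKernel

section GramMellin

variable {n k : ℕ} {C δ t : ℝ} {a : Fin n → ℝ} {P : Matrix (Fin n) (Fin n) ℝ}

/-- The Mellin transform `𝔼 det ^ (i t)` of the Gram determinant of `k` independent uniformly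
permuted copies of the vector `a`, for the bilinear form given by `P`. -/
noncomputable def gramMellin (t : ℝ) (k : ℕ) (P : Matrix (Fin n) (Fin n) ℝ) (a : Fin n → ℝ) : ℂ :=
  𝔼 ω : Fin k → Perm (Fin n), mellinKernel t (formGram P fun i => a ∘ ω i).det

/-- The deterministic approximation of `gramMellin t k P a` for a projection `P` of trace `m`: at
step `i` the quadratic form has trace `m - i`, hence mean `(m - i) / (n - 1)` and relative variance
about `sphericalVar n (m - i)`. -/
noncomputable def mellinProd (t : ℝ) (n k : ℕ) (m : ℝ) : ℂ :=
  ∏ i ∈ range k, mellinKernel t ((m - i) / (n - 1)) * (1 - mellinCoeff t * sphericalVar n (m - i))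

theorem gramMellin_zero : gramMellin t 0 P a = 1 := by
  simp [gramMellin, mellinKernel_one]

theorem gramMellin_succ (hP : IsCenteredProj P) :
    gramMellin t (k + 1) P a = 𝔼 σ : Perm (Fin n),
      mellinKernel t ((a ∘ σ) ⬝ᵥ P *ᵥ (a ∘ σ)) * gramMellin t k (downdate P (a ∘ σ)) a := by
  rw [gramMellin, ← Fintype.expect_equiv (Fin.consEquiv fun _ : Fin (k + 1) => Perm (Fin n)) _ _
    fun _ => rfl, ← univ_product_univ, expect_product]
  refine expect_congr rfl fun σ _ => ?_
  rw [gramMellin, mul_expect]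
  refine expect_congr rfl fun ω _ => ?_
  rw [det_formGram_succ hP, mellinKernel_mul]
  rfl

theorem mellinProd_succ (m : ℝ) : mellinProd t n (k + 1) m =
    mellinKernel t (m / (n - 1)) * (1 - mellinCoeff t * sphericalVar n m) *
      mellinProd t n k (m - 1) := by
  rw [mellinProd, prod_range_succ', mellinProd, mul_comm]
  simp only [Nat.cast_add, Nat.cast_one, Nat.cast_zero, sub_zero, ← sub_sub, sub_right_comm m _ 1]

theorem norm_mellinProd_le (hn : 1 ≤ n) (hδ : 0 < δ) {m : ℝ} (hmn : m ≤ n) (hm : δ * n ≤ m - k) :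
    ‖mellinProd t n k m‖ ≤ Real.exp (‖mellinCoeff t‖ * (2 / δ)) := by
  have : (1 : ℝ) ≤ n := by exact_mod_cast hn
  have hkn : (k : ℝ) ≤ n := by nlinarith
  have hfactor : ∀ i ∈ range k, ‖mellinKernel t ((m - i) / (n - 1)) *
      (1 - mellinCoeff t * sphericalVar n (m - i))‖ ≤
      Real.exp (‖mellinCoeff t‖ * (2 / (δ * n))) := fun i hi => by
    have hik : (i : ℝ) ≤ k := by exact_mod_cast (mem_range.1 hi).le
    have : (0 : ℝ) ≤ i := i.cast_nonneg
    have hvar := abs_sphericalVar_le hn hδ (by linarith : δ * n ≤ m - i) (by linarith)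
    calc _ ≤ 1 * (‖(1 : ℂ)‖ + ‖mellinCoeff t * sphericalVar n (m - i)‖) := by
          rw [norm_mul]
          gcongr
          · exact norm_mellinKernel_le_one _ _
          · exact norm_sub_le _ _
      _ ≤ ‖mellinCoeff t‖ * (2 / (δ * n)) + 1 := by
          rw [one_mul, norm_one, norm_mul, Complex.norm_real, Real.norm_eq_abs, add_comm]
          gcongr
      _ ≤ _ := Real.add_one_le_exp _
  calc ‖mellinProd t n k m‖ ≤ ∏ _i ∈ range k, Real.exp (‖mellinCoeff t‖ * (2 / (δ * n))) := by
        rw [mellinProd, norm_prod]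
        exact prod_le_prod (fun _ _ => norm_nonneg _) hfactor
    _ = Real.exp (k * (‖mellinCoeff t‖ * (2 / (δ * n)))) := by
        rw [prod_const, card_range, ← Real.exp_nat_mul]
    _ ≤ Real.exp (n * (‖mellinCoeff t‖ * (2 / (δ * n)))) := by gcongr
    _ = _ := by field_simp

theorem norm_expect_mul_sub_mul_le {ι : Type*} [Fintype ι] (f g : ι → ℂ) (b T : ℂ) :
    ‖𝔼 i, f i * g i - b * T‖ ≤ 𝔼 i, ‖f i‖ * ‖g i - T‖ + ‖𝔼 i, f i - b‖ * ‖T‖ := by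
  have hsplit : 𝔼 i, f i * g i - b * T = 𝔼 i, f i * (g i - T) + (𝔼 i, f i - b) * T := by
    simp only [mul_sub, expect_sub_distrib, ← expect_mul]
    ring
  rw [hsplit]
  refine (norm_add_le _ _).trans (add_le_add ?_ (norm_mul_le _ _))
  simpa only [norm_mul] using RCLike.norm_expect_le (K := ℂ) (f := fun i => f i * (g i - T))

theorem mellinKernel_quadForm (hn : 2 ≤ n) (hm : P.trace ≠ 0) (u : Fin n → ℝ) :
    mellinKernel t (u ⬝ᵥ P *ᵥ u) =
      mellinKernel t (P.trace / (n - 1)) * mellinKernel t (1 + relDev P u) := by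
  have hn1 : (2 : ℝ) ≤ n := by exact_mod_cast hn
  have hn0 : (n : ℝ) - 1 ≠ 0 := by linarith
  rw [← mellinKernel_mul, relDev]
  congr 1
  field_simp
  ring

theorem exists_expect_diagDev_downdate_le (C : ℝ) (hδ : 0 < δ) : ∃ D : ℝ, 0 ≤ D ∧
    ∀ {n : ℕ} {a : Fin n → ℝ} {P : Matrix (Fin n) (Fin n) ℝ}, 2 ≤ n → IsScore C a →
      IsCenteredProj P → δ * n ≤ P.trace → 1 ≤ P.trace →
      𝔼 σ : Perm (Fin n), diagDev (downdate P (a ∘ σ)) ≤ diagDev P + D / √n := by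
  refine ⟨2 * √(64 * |C| / δ ^ 2) + 4 * (64 * |C| / δ ^ 2) + 4 * (1 / δ ^ 2) * (80 * C ^ 2),
    by positivity, fun {n a P} hn ha hP hm hm1 => ?_⟩
  have hn1 : (1 : ℝ) ≤ n := by exact_mod_cast hn.trans' one_le_two
  have hroot : √(n : ℝ) ≤ n := Real.sqrt_le_self_iff.2 (.inr hn1)
  have hC : |C| = C := abs_of_nonneg (zero_le_one.trans ha.one_le_const)
  have hC0 := hC ▸ abs_nonneg C
  calc _ ≤ diagDev P + (2 * √(64 * C / (δ ^ 2 * n)) + 4 * (64 * C / (δ ^ 2 * n))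
        + 4 * (1 / δ ^ 2) * (80 * C ^ 2 / n)) := expect_diagDev_downdate_le hn ha hP hδ hm hm1
    _ = diagDev P + (2 * (√(64 * C / δ ^ 2) / √n) + 4 * (64 * C / δ ^ 2 / n)
        + 4 * (1 / δ ^ 2) * (80 * C ^ 2 / n)) := by
        rw [← div_div, Real.sqrt_div' _ (by linarith)]
    _ ≤ diagDev P + (2 * (√(64 * C / δ ^ 2) / √n) + 4 * (64 * C / δ ^ 2 / √n)
        + 4 * (1 / δ ^ 2) * (80 * C ^ 2 / √n)) := by gcongr
    _ = _ := by
        rw [hC]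
        ring

theorem norm_gramMellin_succ_sub_le (hn : 2 ≤ n) (hP : IsCenteredProj P) (hm : P.trace ≠ 0)
    (T : ℂ) :
    ‖gramMellin t (k + 1) P a - mellinKernel t (P.trace / (n - 1)) *
      (1 - mellinCoeff t * sphericalVar n P.trace) * T‖ ≤
      𝔼 σ : Perm (Fin n), ‖mellinKernel t ((a ∘ σ) ⬝ᵥ P *ᵥ (a ∘ σ))‖ *
        ‖gramMellin t k (downdate P (a ∘ σ)) a - T‖ +
      ‖𝔼 σ : Perm (Fin n), mellinKernel t (1 + relDev P (a ∘ σ)) -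
        (1 - mellinCoeff t * sphericalVar n P.trace)‖ * ‖T‖ := by
  have hmean : 𝔼 σ : Perm (Fin n), mellinKernel t ((a ∘ σ) ⬝ᵥ P *ᵥ (a ∘ σ)) =
      mellinKernel t (P.trace / (n - 1)) *
        𝔼 σ : Perm (Fin n), mellinKernel t (1 + relDev P (a ∘ σ)) := by
    simp only [mellinKernel_quadForm hn hm, mul_expect]
  rw [gramMellin_succ hP]
  refine (norm_expect_mul_sub_mul_le _ _ _ _).trans
    (add_le_add_right (mul_le_mul_of_nonneg_right ?_ (norm_nonneg T)) _)
  rw [hmean, ← mul_sub, norm_mul]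
  exact mul_le_of_le_one_left (norm_nonneg _) (norm_mellinKernel_le_one _ _)

theorem norm_gramMellin_succ_sub_le_of_forall (hn : 2 ≤ n) (hP : IsCenteredProj P)
    (hm : P.trace ≠ 0) {T : ℂ} {b c : ℝ} (hb : 0 ≤ b) (hc : 0 ≤ c)
    (h : ∀ Q : Matrix (Fin n) (Fin n) ℝ, IsCenteredProj Q → Q.trace = P.trace - 1 →
      ‖gramMellin t k Q a - T‖ ≤ b * diagDev Q + c) :
    ‖gramMellin t (k + 1) P a - mellinKernel t (P.trace / (n - 1)) *
      (1 - mellinCoeff t * sphericalVar n P.trace) * T‖ ≤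
      b * 𝔼 σ : Perm (Fin n), diagDev (downdate P (a ∘ σ)) + c +
      ‖𝔼 σ : Perm (Fin n), mellinKernel t (1 + relDev P (a ∘ σ)) -
        (1 - mellinCoeff t * sphericalVar n P.trace)‖ * ‖T‖ := by
  have hterm : ∀ σ : Perm (Fin n), ‖mellinKernel t ((a ∘ σ) ⬝ᵥ P *ᵥ (a ∘ σ))‖ *
      ‖gramMellin t k (downdate P (a ∘ σ)) a - T‖ ≤ b * diagDev (downdate P (a ∘ σ)) + c :=
    fun σ => by
      have := diagDev_nonneg (downdate P (a ∘ σ))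
      rcases eq_or_ne ((a ∘ σ) ⬝ᵥ P *ᵥ (a ∘ σ)) 0 with hq | hq
      · simp only [hq, mellinKernel, if_true, norm_zero, zero_mul]
        positivity
      · exact (mul_le_of_le_one_left (norm_nonneg _) (norm_mellinKernel_le_one _ _)).trans
          (h _ (hP.downdate _) (hP.trace_downdate hq))
  refine (norm_gramMellin_succ_sub_le hn hP hm T).trans (add_le_add_left ?_ _)
  calc _ ≤ 𝔼 σ : Perm (Fin n), (b * diagDev (downdate P (a ∘ σ)) + c) :=
        expect_le_expect fun σ _ => hterm σ
    _ = _ := by rw [expect_add_distrib, ← mul_expect, Fintype.expect_const]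

theorem exists_norm_gramMellin_sub_mellinProd_le (C : ℝ) (hδ : 0 < δ) (t : ℝ) :
    ∃ K D : ℝ, 0 ≤ K ∧ 0 ≤ D ∧ ∀ {n : ℕ} {a : Fin n → ℝ}, 4 ≤ n → IsScore C a →
      ∀ (k : ℕ) {P : Matrix (Fin n) (Fin n) ℝ}, IsCenteredProj P → δ * n ≤ P.trace - k →
      ‖gramMellin t k P a - mellinProd t n k P.trace‖ ≤
        K * (k * (diagDev P / n ^ 2) + k * (1 / (n * √n)) + k ^ 2 * (D / (n ^ 2 * √n))) := by
  obtain ⟨A, hA, hmean⟩ := exists_norm_expect_mellinKernel_sub_le C hδ t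
  obtain ⟨D, hD, hdown⟩ := exists_expect_diagDev_downdate_le C hδ
  set B := Real.exp (‖mellinCoeff t‖ * (2 / δ))
  refine ⟨A * B, D, by positivity, hD, fun {n a} hn ha k => ?_⟩
  have : 0 < √(n : ℝ) := Real.sqrt_pos.2 (by exact_mod_cast ha.pos)
  induction k with
  | zero => intros; simp [gramMellin_zero, mellinProd]
  | succ k ih =>
    intro P hP hm
    push_cast at hm
    have : (0 : ℝ) ≤ k := k.cast_nonneg
    have hδn : 0 < δ * n := by
      have : (4 : ℝ) ≤ n := by exact_mod_cast hn
      positivity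
    have hT : ‖mellinProd t n k (P.trace - 1)‖ ≤ B :=
      norm_mellinProd_le (by omega) hδ (by linarith [hP.trace_le]) (by linarith)
    have := diagDev_nonneg P
    rw [mellinProd_succ]
    calc _ ≤ A * B * (k / n ^ 2) * 𝔼 σ : Perm (Fin n), diagDev (downdate P (a ∘ σ))
          + A * B * (k * (1 / (n * √n)) + k ^ 2 * (D / (n ^ 2 * √n)))
          + ‖𝔼 σ : Perm (Fin n), mellinKernel t (1 + relDev P (a ∘ σ)) -
            (1 - mellinCoeff t * sphericalVar n P.trace)‖ * ‖mellinProd t n k (P.trace - 1)‖ :=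
          norm_gramMellin_succ_sub_le_of_forall (by omega) hP (by linarith) (by positivity)
            (by positivity) fun Q hQ htr =>
              (htr ▸ ih hQ (by linarith : δ * n ≤ Q.trace - k)).trans_eq (by ring)
      _ ≤ A * B * (k / n ^ 2) * (diagDev P + D / √n)
          + A * B * (k * (1 / (n * √n)) + k ^ 2 * (D / (n ^ 2 * √n)))
          + A * (diagDev P / n ^ 2 + 1 / (n * √n)) * B := by
          gcongr
          · exact hdown (by omega) ha hP (by linarith) (by linarith)
          · exact hmean hn ha hP (by linarith)
      _ = A * B * ((k + 1) * (diagDev P / n ^ 2) + (k + 1) * (1 / (n * √n)) +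
            (k + k ^ 2) * (D / (n ^ 2 * √n))) := by
          field_simp
          ring
      _ ≤ _ := by
          push_cast
          gcongr
          nlinarith

theorem exists_norm_gramMellin_centering_sub_le (C : ℝ) (hδ : 0 < δ) (t : ℝ) :
    ∃ K : ℝ, ∀ {n : ℕ} {a : Fin n → ℝ}, 4 ≤ n → IsScore C a → ∀ {k : ℕ}, δ * n ≤ n - 1 - k →
      ‖gramMellin t k (centering n) a - mellinProd t n k (n - 1)‖ ≤ K / √n := by
  obtain ⟨K, D, hK, hD, hbound⟩ := exists_norm_gramMellin_sub_mellinProd_le C hδ t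
  refine ⟨K * (1 + D), fun {n a} hn ha k hk => ?_⟩
  have : (4 : ℝ) ≤ n := by exact_mod_cast hn
  have hkn : (k : ℝ) ≤ n := by nlinarith
  have htr := trace_centering (by omega : n ≠ 0)
  have hdev : diagDev (centering n) = 0 := by simp [diagDev, htr, centering_apply_self]
  have := hbound hn ha k isCenteredProj_centering (htr.symm ▸ hk)
  rw [htr, hdev] at this
  calc _ ≤ K * (k * (1 / (n * √n)) + (k : ℝ) ^ 2 * (D / (n ^ 2 * √n))) := by simpa using this
    _ ≤ K * (n * (1 / (n * √n)) + (n : ℝ) ^ 2 * (D / (n ^ 2 * √n))) := by gcongr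
    _ = _ := by field_simp

end GramMellin

/-! ### Asymptotics -/

section Products

theorem norm_prod_sub_prod_le {ι R : Type*} [NormedCommRing R] [NormOneClass R] (s : Finset ι)
    {f g : ι → R} {r ε : ℝ} (hr : 1 ≤ r) (hε : 0 ≤ ε) (hf : ∀ i ∈ s, ‖f i‖ ≤ r)
    (hg : ∀ i ∈ s, ‖g i‖ ≤ r) (hfg : ∀ i ∈ s, ‖f i - g i‖ ≤ ε) :
    ‖∏ i ∈ s, f i - ∏ i ∈ s, g i‖ ≤ #s * ε * r ^ #s := by
  classical
  induction s using Finset.induction_on with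
  | empty => simp
  | insert j s hj ih =>
    simp only [mem_insert, forall_eq_or_imp] at hf hg hfg
    have hprod : ‖∏ i ∈ s, g i‖ ≤ r ^ #s :=
      (s.norm_prod_le g).trans
        ((prod_le_prod (fun _ _ => norm_nonneg _) hg.2).trans_eq (prod_const r))
    rw [prod_insert hj, prod_insert hj, card_insert_of_notMem hj]
    calc ‖f j * ∏ i ∈ s, f i - g j * ∏ i ∈ s, g i‖
        = ‖f j * (∏ i ∈ s, f i - ∏ i ∈ s, g i) + (f j - g j) * ∏ i ∈ s, g i‖ := by ring_nf
      _ ≤ r * (#s * ε * r ^ #s) + ε * r ^ #s :=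
          norm_add_le_of_le (norm_mul_le_of_le hf.1 (ih hf.2 hg.2 hfg.2))
            (norm_mul_le_of_le hfg.1 hprod)
      _ ≤ r * (#s * ε * r ^ #s) + ε * r ^ (#s + 1) := by
          gcongr
          exact Nat.le_succ _
      _ = _ := by
          push_cast
          ring

theorem norm_prod_one_add_sub_prod_exp_le {ι : Type*} (s : Finset ι) {c z : ι → ℂ} {b : ℝ}
    (hb : 0 ≤ b) (hb1 : b ≤ 1) (hc : ∀ i ∈ s, ‖c i‖ ≤ 1) (hz : ∀ i ∈ s, ‖z i‖ ≤ b) :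
    ‖∏ i ∈ s, c i * (1 + z i) - ∏ i ∈ s, c i * Complex.exp (z i)‖ ≤
      #s * b ^ 2 * Real.exp (#s * b) := by
  rw [Real.exp_nat_mul]
  refine norm_prod_sub_prod_le s (Real.one_le_exp hb) (sq_nonneg b) (fun i hi => ?_)
    (fun i hi => ?_) fun i hi => ?_
  · refine (norm_mul_le_of_le (hc i hi) (norm_add_le_of_le norm_one.le (hz i hi))).trans ?_
    linarith [Real.add_one_le_exp b]
  · refine (norm_mul_le_of_le (hc i hi) (Complex.norm_exp_le_exp_norm (z i))).trans ?_
    rw [one_mul]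
    exact Real.exp_le_exp.2 (hz i hi)
  · rw [← mul_sub, ← one_mul (b ^ 2)]
    refine norm_mul_le_of_le (hc i hi) ?_
    rw [norm_sub_rev, ← sub_sub]
    exact (Complex.norm_exp_sub_one_sub_id_le ((hz i hi).trans hb1)).trans
      (pow_le_pow_left₀ (norm_nonneg _) (hz i hi) 2)

end Products

section MellinProd

/-- The logarithm of the product of the means `(n - 1 - i) / (n - 1)` of the `k` quadratic forms
whose product is the Gram determinant. -/
noncomputable def logMeanSum (n k : ℕ) : ℝ :=
  ∑ i ∈ range k, Real.log (((n : ℝ) - 1 - i) / (n - 1))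

/-- The sum of the approximate relative variances of the `k` quadratic forms whose product is the
Gram determinant. -/
noncomputable def varSum (n k : ℕ) : ℝ := ∑ i ∈ range k, sphericalVar n (n - 1 - i)

theorem exp_logMeanSum_sub_varSum {n k : ℕ} (hk : (k : ℝ) ≤ n - 1) (t : ℝ) :
    Complex.exp ((t * logMeanSum n k : ℝ) * Complex.I - mellinCoeff t * varSum n k) =
      ∏ i ∈ range k, mellinKernel t (((n : ℝ) - 1 - i) / (n - 1)) *
        Complex.exp (-(mellinCoeff t * sphericalVar n (n - 1 - i))) := by
  rw [logMeanSum, varSum, Complex.ofReal_mul, Complex.ofReal_sum, Complex.ofReal_sum, mul_sum,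
    mul_sum, sum_mul, ← sum_sub_distrib, Complex.exp_sum]
  refine prod_congr rfl fun i hi => ?_
  have : (i : ℝ) + 1 ≤ k := by exact_mod_cast mem_range.1 hi
  have : (0 : ℝ) ≤ i := i.cast_nonneg
  have hmean : ((n : ℝ) - 1 - i) / (n - 1) ≠ 0 := (div_pos (by linarith) (by linarith)).ne'
  rw [mellinKernel, if_neg hmean, ← Complex.exp_add, Complex.ofReal_mul, sub_eq_add_neg]

theorem norm_mellinProd_sub_exp_le {n k : ℕ} {δ t B : ℝ} (hδ : 0 < δ) (hn : 1 ≤ n)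
    (hk : δ * n ≤ n - 1 - k) (hB : ‖mellinCoeff t‖ * (2 / δ) = B) (hBn : B ≤ n) :
    ‖mellinProd t n k (n - 1) -
      Complex.exp ((t * logMeanSum n k : ℝ) * Complex.I - mellinCoeff t * varSum n k)‖ ≤
      B ^ 2 * Real.exp B / n := by
  have hn0 : (0 : ℝ) < n := by exact_mod_cast hn
  have hδn : 0 < δ * n := by positivity
  have hB0 : 0 ≤ B := hB ▸ by positivity
  rw [exp_logMeanSum_sub_varSum (by linarith), mellinProd]
  simp only [sub_eq_add_neg (1 : ℂ)]
  calc _ ≤ #(range k) * (B / n) ^ 2 * Real.exp (#(range k) * (B / n)) := by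
        refine norm_prod_one_add_sub_prod_exp_le _ (by positivity) ((div_le_one hn0).2 hBn)
          (fun i _ => norm_mellinKernel_le_one _ _) fun i hi => ?_
        have : (i : ℝ) ≤ k := by exact_mod_cast (mem_range.1 hi).le
        have : (0 : ℝ) ≤ i := i.cast_nonneg
        calc ‖-(mellinCoeff t * sphericalVar n (n - 1 - i))‖
            ≤ ‖mellinCoeff t‖ * (2 / (δ * n)) := by
              rw [norm_neg, norm_mul, Complex.norm_real, Real.norm_eq_abs]
              gcongr
              exact abs_sphericalVar_le hn hδ (by linarith) (by linarith)
          _ = B / n := by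
              rw [← hB]
              field_simp
    _ ≤ n * (B / n) ^ 2 * Real.exp (n * (B / n)) := by
        rw [card_range]
        have : (k : ℝ) ≤ n := by linarith
        gcongr
    _ = _ := by field_simp

end MellinProd

section Sums

theorem sum_range_log_sub {N k : ℕ} (hk : k ≤ N) : ∑ i ∈ range k, Real.log ((N : ℝ) - i) =
    Real.log N.factorial - Real.log (N - k).factorial := by
  induction k with
  | zero => simp
  | succ k ih =>
    obtain ⟨m, rfl⟩ := Nat.exists_eq_add_of_le hk
    have hfact : k + 1 + m - k = m + 1 := by omega
    rw [sum_range_succ, ih (by omega), hfact, Nat.factorial_succ, Nat.add_sub_cancel_left]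
    push_cast
    rw [Real.log_mul (by positivity) (by positivity)]
    ring_nf

theorem sum_range_inv_sub {N k : ℕ} (hk : k ≤ N) :
    ∑ i ∈ range k, ((N : ℝ) - i)⁻¹ = harmonic N - harmonic (N - k) := by
  induction k with
  | zero => simp
  | succ k ih =>
    obtain ⟨m, rfl⟩ := Nat.exists_eq_add_of_le hk
    have hharm : k + 1 + m - k = m + 1 := by omega
    rw [sum_range_succ, ih (by omega), hharm, harmonic_succ, Nat.add_sub_cancel_left]
    push_cast
    ring_nf

theorem logMeanSum_succ {N k : ℕ} (hk : k ≤ N) : logMeanSum (N + 1) k =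
    Real.log N.factorial - Real.log (N - k).factorial - k * Real.log N := by
  rw [← sum_range_log_sub hk, logMeanSum, ← card_range k, ← nsmul_eq_mul, ← sum_const,
    card_range, ← sum_sub_distrib]
  refine sum_congr rfl fun i hi => ?_
  have : (i : ℝ) + 1 ≤ N := by exact_mod_cast (mem_range.1 hi).trans_le hk
  have : (0 : ℝ) ≤ i := i.cast_nonneg
  push_cast
  rw [add_sub_cancel_right, Real.log_div (by linarith) (by linarith)]

theorem varSum_succ {N k : ℕ} (hk : k ≤ N) : varSum (N + 1) k =
    2 / (N + 2) * (N * (harmonic N - harmonic (N - k)) - k) := by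
  have hterm : ∀ i ∈ range k, sphericalVar (N + 1) ((N + 1 : ℕ) - 1 - i) =
      2 / (N + 2) * (N * ((N : ℝ) - i)⁻¹ - 1) := fun i hi => by
    have : (i : ℝ) + 1 ≤ N := by exact_mod_cast (mem_range.1 hi).trans_le hk
    have : (N : ℝ) - i ≠ 0 := by linarith
    rw [sphericalVar]
    push_cast
    rw [add_sub_cancel_right]
    field_simp
    ring
  rw [varSum, sum_congr rfl hterm, ← mul_sum, sum_sub_distrib, ← mul_sum, sum_range_inv_sub hk]
  simp

end Sums

section Limits

variable {y : ℝ} {p : ℕ → ℕ}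

theorem eventually_mul_le_sub_one_sub (hpy : Tendsto (fun n => (p n : ℝ) / n) atTop (𝓝 y)) {c : ℝ}
    (hc : c < 1 - y) : ∀ᶠ n : ℕ in atTop, c * n ≤ n - 1 - p n := by
  have hlim : Tendsto (fun n : ℕ => 1 - 1 / (n : ℝ) - p n / n) atTop (𝓝 (1 - 0 - y)) :=
    (tendsto_const_nhds.sub (tendsto_const_div_atTop_nhds_zero_nat 1)).sub hpy
  filter_upwards [hlim.eventually_const_le (by linarith : c < 1 - 0 - y), eventually_gt_atTop 0]
    with n hn hn0
  have : (0 : ℝ) < n := by exact_mod_cast hn0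
  calc c * n ≤ (1 - 1 / n - p n / n) * n := by gcongr
    _ = n - 1 - p n := by field_simp

theorem tendsto_sub_one_sub_atTop (hy : y < 1)
    (hpy : Tendsto (fun n => (p n : ℝ) / n) atTop (𝓝 y)) :
    Tendsto (fun n : ℕ => (n : ℝ) - 1 - p n) atTop atTop :=
  tendsto_atTop_mono' _ (eventually_mul_le_sub_one_sub hpy (by linarith : (1 - y) / 2 < 1 - y))
    (tendsto_natCast_atTop_atTop.const_mul_atTop (by linarith))

theorem eventually_add_two_le (hy : y < 1) (hpy : Tendsto (fun n => (p n : ℝ) / n) atTop (𝓝 y)) :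
    ∀ᶠ n : ℕ in atTop, p n + 2 ≤ n := by
  filter_upwards [(tendsto_sub_one_sub_atTop hy hpy).eventually_ge_atTop 1] with n hn
  have : (p n : ℝ) + 2 ≤ n := by linarith
  exact_mod_cast this

theorem tendsto_natSub_one_sub_atTop (hy : y < 1)
    (hpy : Tendsto (fun n => (p n : ℝ) / n) atTop (𝓝 y)) :
    Tendsto (fun n : ℕ => n - 1 - p n) atTop atTop := by
  rw [← tendsto_natCast_atTop_iff (R := ℝ)]
  refine (tendsto_sub_one_sub_atTop hy hpy).congr' ?_
  filter_upwards [eventually_add_two_le hy hpy] with n hn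
  rw [Nat.cast_sub (by omega), Nat.cast_sub (by omega), Nat.cast_one]

theorem tendsto_natSub_one_sub_div (hy : y < 1)
    (hpy : Tendsto (fun n => (p n : ℝ) / n) atTop (𝓝 y)) :
    Tendsto (fun n : ℕ => ((n - 1 - p n : ℕ) : ℝ) / (n - 1 : ℕ)) atTop (𝓝 (1 - y)) := by
  have hinv := tendsto_const_div_atTop_nhds_zero_nat (1 : ℝ)
  have hlim : Tendsto (fun n : ℕ => (1 - 1 / (n : ℝ) - p n / n) / (1 - 1 / (n : ℝ))) atTop
      (𝓝 ((1 - 0 - y) / (1 - 0))) :=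
    ((tendsto_const_nhds.sub hinv).sub hpy).div (tendsto_const_nhds.sub hinv) (by norm_num)
  rw [sub_zero, div_one] at hlim
  refine hlim.congr' ?_
  filter_upwards [eventually_add_two_le hy hpy] with n hn
  have : (n : ℝ) ≠ 0 := by
    norm_cast
    omega
  rw [Nat.cast_sub (by omega), Nat.cast_sub (by omega), Nat.cast_one]
  field_simp

theorem tendsto_harmonic_sub_harmonic (hy : y < 1)
    (hpy : Tendsto (fun n => (p n : ℝ) / n) atTop (𝓝 y)) :
    Tendsto (fun n : ℕ => (harmonic (n - 1) : ℝ) - harmonic (n - 1 - p n)) atTop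
      (𝓝 (-Real.log (1 - y))) := by
  have hlim := ((Real.tendsto_harmonic_sub_log.comp (tendsto_sub_atTop_nat 1)).sub
    (Real.tendsto_harmonic_sub_log.comp (tendsto_natSub_one_sub_atTop hy hpy))).sub
    ((tendsto_natSub_one_sub_div hy hpy).log (by linarith))
  rw [sub_self, zero_sub] at hlim
  refine hlim.congr' ?_
  filter_upwards [eventually_add_two_le hy hpy] with n hn
  rw [Real.log_div (by norm_cast; omega) (by norm_cast; omega)]
  simp only [Function.comp_apply]
  ring

theorem tendsto_varSum (hy : y < 1) (hpy : Tendsto (fun n => (p n : ℝ) / n) atTop (𝓝 y)) :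
    Tendsto (fun n => varSum n (p n)) atTop (𝓝 (-2 * Real.log (1 - y) - 2 * y)) := by
  have hinv := tendsto_const_div_atTop_nhds_zero_nat (1 : ℝ)
  have hlim : Tendsto (fun n : ℕ => 2 / (1 + 1 / (n : ℝ)) * ((1 - 1 / (n : ℝ)) *
      ((harmonic (n - 1) : ℝ) - harmonic (n - 1 - p n)) - p n / n)) atTop
      (𝓝 (2 / (1 + 0) * ((1 - 0) * -Real.log (1 - y) - y))) :=
    (tendsto_const_nhds.div (tendsto_const_nhds.add hinv) (by norm_num)).mul
      (((tendsto_const_nhds.sub hinv).mul (tendsto_harmonic_sub_harmonic hy hpy)).sub hpy)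
  refine (hlim.congr' ?_).trans_eq (by ring_nf)
  filter_upwards [eventually_add_two_le hy hpy] with n hn
  obtain ⟨N, rfl⟩ : ∃ N, n = N + 1 := ⟨n - 1, by omega⟩
  rw [varSum_succ (by omega), Nat.add_sub_cancel]
  push_cast
  field_simp
  ring

/-- Both factorials are expressed through `Stirling.stirlingSeq`; the elementary terms that do not
cancel are arranged so that each one converges when `M / (M + k)` does. -/
theorem logMeanSum_add_eq {M : ℕ} (hM : M ≠ 0) (k : ℕ) :
    logMeanSum (M + k + 1) k + (M + 1) * Real.log ((M + 1) / (M + k + 1)) + k =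
      Real.log (Stirling.stirlingSeq (M + k)) - Real.log (Stirling.stirlingSeq M) -
        1 / 2 * Real.log (M / (M + k : ℕ)) + Real.log ((M + 1) / (M + k + 1)) +
        (M * Real.log (1 + 1 / M) - M / (M + k : ℕ) * ((M + k : ℕ) *
          Real.log (1 + 1 / (M + k : ℕ)))) := by
  have : (0 : ℝ) < M := by exact_mod_cast Nat.pos_of_ne_zero hM
  have : (0 : ℝ) < M + k := by positivity
  rw [logMeanSum_succ (Nat.le_add_left k M), Nat.add_sub_cancel, Stirling.log_stirlingSeq_formula,
    Stirling.log_stirlingSeq_formula]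
  push_cast
  have hM1 : (1 : ℝ) + 1 / M = (M + 1) / M := by field_simp
  have hN1 : (1 : ℝ) + 1 / (M + k) = (M + k + 1) / (M + k) := by field_simp
  rw [hM1, hN1, Real.log_div, Real.log_div, Real.log_div, Real.log_div, Real.log_div, Real.log_div,
    Real.log_mul, Real.log_mul, Real.log_exp] <;> try positivity
  field_simp
  ring

theorem tendsto_logMeanSum_add (hy : y < 1)
    (hpy : Tendsto (fun n => (p n : ℝ) / n) atTop (𝓝 y)) :
    Tendsto (fun n => logMeanSum n (p n) + ((n : ℝ) - p n) * Real.log (1 - (p n : ℝ) / n) + p n)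
      atTop (𝓝 (1 / 2 * Real.log (1 - y) + y)) := by
  have hy0 : 1 - y ≠ 0 := by linarith
  have hN : Tendsto (fun n : ℕ => n - 1) atTop atTop := tendsto_sub_atTop_nat 1
  have hM := tendsto_natSub_one_sub_atTop hy hpy
  have hratio := tendsto_natSub_one_sub_div hy hpy
  have hstirling := Stirling.tendsto_stirlingSeq_sqrt_pi.log (Real.sqrt_pos.2 Real.pi_pos).ne'
  have hexp := (Real.tendsto_mul_log_one_add_div_atTop 1).comp
    (tendsto_natCast_atTop_atTop (R := ℝ))
  have hlim := ((((hstirling.comp hN).sub (hstirling.comp hM)).sub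
    ((hratio.log hy0).const_mul (1 / 2))).add ((tendsto_const_nhds.sub hpy).log hy0)).add
    ((hexp.comp hM).sub (hratio.mul (hexp.comp hN)))
  refine (hlim.congr' ?_).trans_eq (by ring_nf)
  filter_upwards [eventually_add_two_le hy hpy] with n hn
  simp only [Function.comp_apply]
  generalize p n = k at hn ⊢
  obtain ⟨M, rfl⟩ : ∃ M, n = M + k + 1 := ⟨n - 1 - k, by omega⟩
  have hlin : ((M + k + 1 : ℕ) : ℝ) - k = M + 1 := by
    push_cast
    ring
  have hlog : 1 - (k : ℝ) / (M + k + 1 : ℕ) = (M + 1) / (M + k + 1) := by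
    push_cast
    field_simp
    ring
  rw [Nat.add_sub_cancel, Nat.add_sub_cancel, hlin, hlog, logMeanSum_add_eq (by omega)]

end Limits

/-! ### The central limit theorem -/

section CentralLimit

variable {n k : ℕ} {C y : ℝ} {p : ℕ → ℕ}

/-- The matrix of inner products of the permuted score vectors `a ∘ ω i`. -/
def scoreGram (a : Fin n → ℝ) (ω : Fin k → Perm (Fin n)) : Matrix (Fin k) (Fin k) ℝ :=
  Matrix.of fun i j => (a ∘ ω i) ⬝ᵥ (a ∘ ω j)

theorem formGram_centering {a : Fin n → ℝ} (ha : ∑ i, a i = 0) (ω : Fin k → Perm (Fin n)) :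
    formGram (centering n) (fun i => a ∘ ω i) = scoreGram a ω := by
  ext i j
  rw [formGram, scoreGram, Matrix.of_apply, Matrix.of_apply,
    centering_mulVec (a ∘ ω j) ((Equiv.sum_comp (ω j) a).trans ha)]

theorem tendsto_gramMellin_centering_sub_exp (hy : y < 1)
    (hpy : Tendsto (fun n => (p n : ℝ) / n) atTop (𝓝 y)) {a : ∀ n, Fin n → ℝ}
    (ha : ∀ᶠ n in atTop, IsScore C (a n)) (t : ℝ) :
    Tendsto (fun n => gramMellin t (p n) (centering n) (a n) - Complex.exp
      ((t * logMeanSum n (p n) : ℝ) * Complex.I - mellinCoeff t * varSum n (p n)))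
      atTop (𝓝 0) := by
  have hδ : 0 < (1 - y) / 2 := by linarith
  obtain ⟨K, hK⟩ := exists_norm_gramMellin_centering_sub_le C hδ t
  set B := ‖mellinCoeff t‖ * (2 / ((1 - y) / 2)) with hB
  have hbound : Tendsto (fun n : ℕ => K / √(n : ℝ) + B ^ 2 * Real.exp B / n) atTop (𝓝 0) := by
    simpa using ((Real.tendsto_sqrt_atTop.comp tendsto_natCast_atTop_atTop).const_div_atTop K).add
      (tendsto_const_div_atTop_nhds_zero_nat (B ^ 2 * Real.exp B))
  refine squeeze_zero_norm' ?_ hbound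
  filter_upwards [eventually_mul_le_sub_one_sub hpy (by linarith : (1 - y) / 2 < 1 - y), ha,
    eventually_ge_atTop 4, tendsto_natCast_atTop_atTop.eventually_ge_atTop B] with n hpn han hn hBn
  exact (norm_sub_le_norm_sub_add_norm_sub _ (mellinProd t n (p n) (n - 1)) _).trans
    (add_le_add (hK hn han hpn) (norm_mellinProd_sub_exp_le hδ (by omega) hpn hB.symm hBn))

/-- `Real.log 0 = 0`, whereas `mellinKernel t 0 = 0`: the two averages differ by at most the
proportion of zeros of `X`, which the average of `mellinKernel 0` detects. -/
theorem norm_expect_exp_log_sub_expect_mellinKernel_le {ι : Type*} [Fintype ι] [Nonempty ι]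
    (X : ι → ℝ) (t : ℝ) :
    ‖𝔼 i, Complex.exp ((t * Real.log (X i) : ℝ) * Complex.I) - 𝔼 i, mellinKernel t (X i)‖ ≤
      ‖1 - 𝔼 i, mellinKernel 0 (X i)‖ := by
  have hzeros : 1 - 𝔼 i, mellinKernel 0 (X i) = ((𝔼 i, if X i = 0 then 1 else 0 : ℝ) : ℂ) := by
    rw [← Fintype.expect_const (ι := ι) (1 : ℂ), ← expect_sub_distrib]
    push_cast
    refine expect_congr rfl fun i _ => ?_
    by_cases hi : X i = 0 <;> simp [mellinKernel, hi]
  rw [hzeros, Complex.norm_real, ← expect_sub_distrib]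
  refine (RCLike.norm_expect_le (K := ℂ)).trans ((expect_le_expect fun i _ => ?_).trans
    (le_abs_self _))
  by_cases hi : X i = 0 <;> simp [mellinKernel, hi]

theorem tendsto_expect_exp_log_det_sub_exp (hy : y < 1)
    (hpy : Tendsto (fun n => (p n : ℝ) / n) atTop (𝓝 y)) {a : ∀ n, Fin n → ℝ}
    (ha : ∀ᶠ n in atTop, IsScore C (a n)) (t : ℝ) :
    Tendsto (fun n => 𝔼 ω : Fin (p n) → Perm (Fin n),
      Complex.exp ((t * Real.log (scoreGram (a n) ω).det : ℝ) * Complex.I) - Complex.exp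
      ((t * logMeanSum n (p n) : ℝ) * Complex.I - mellinCoeff t * varSum n (p n)))
      atTop (𝓝 0) := by
  have hmellin := tendsto_gramMellin_centering_sub_exp hy hpy ha t
  have hzeros := tendsto_gramMellin_centering_sub_exp hy hpy ha 0
  simp only [mellinCoeff, Complex.ofReal_zero, zero_mul, mul_zero, ne_eq, OfNat.ofNat_ne_zero,
    not_false_eq_true, zero_pow, add_zero, zero_div, sub_zero, Complex.exp_zero] at hzeros
  refine squeeze_zero_norm' ?_
    (by simpa only [norm_zero, add_zero] using hzeros.norm.add hmellin.norm)
  filter_upwards [ha] with n han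
  have hgram : ∀ s, gramMellin s (p n) (centering n) (a n) =
      𝔼 ω : Fin (p n) → Perm (Fin n), mellinKernel s (scoreGram (a n) ω).det := fun s => by
    simp only [gramMellin, formGram_centering han.sum_eq_zero]
  refine (norm_sub_le_norm_sub_add_norm_sub _ (gramMellin t (p n) (centering n) (a n)) _).trans
    (add_le_add_left ?_ _)
  rw [norm_sub_rev _ (1 : ℂ), hgram, hgram]
  exact norm_expect_exp_log_sub_expect_mellinKernel_le _ t

theorem tendsto_expect_exp_log_det (hy : y < 1)
    (hpy : Tendsto (fun n => (p n : ℝ) / n) atTop (𝓝 y)) {a : ∀ n, Fin n → ℝ}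
    (ha : ∀ᶠ n in atTop, IsScore C (a n)) (t : ℝ) :
    Tendsto (fun n => 𝔼 ω : Fin (p n) → Perm (Fin n), Complex.exp
      ((t * (Real.log (scoreGram (a n) ω).det + ((n : ℝ) - p n) * Real.log (1 - (p n : ℝ) / n)
        + p n) : ℝ) * Complex.I)) atTop
      (𝓝 (Complex.exp ((t * (1 / 2 * Real.log (1 - y) + y) : ℝ) * Complex.I -
        mellinCoeff t * (-2 * Real.log (1 - y) - 2 * y : ℝ)))) := by
  have hmean := tendsto_logMeanSum_add hy hpy
  obtain ⟨b, hb⟩ : ∃ b : ℕ → ℝ,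
      ∀ n : ℕ, ((n : ℝ) - p n) * Real.log (1 - (p n : ℝ) / n) + p n = b n := ⟨_, fun _ => rfl⟩
  simp only [add_assoc, hb] at hmean ⊢
  have hphase : ∀ n (x : ℝ) (z : ℂ), Complex.exp ((t * (x + b n) : ℝ) * Complex.I - z) =
      Complex.exp ((t * b n : ℝ) * Complex.I) * Complex.exp ((t * x : ℝ) * Complex.I - z) :=
    fun n x z => by
      rw [← Complex.exp_add]
      push_cast
      ring_nf
  have hlim := (Complex.continuous_exp.tendsto _).comp (((hmean.const_mul t).ofReal.mul_const
    Complex.I).sub ((tendsto_varSum hy hpy).ofReal.const_mul (mellinCoeff t)))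
  have herr := (tendsto_expect_exp_log_det_sub_exp hy hpy ha t).norm
  rw [norm_zero] at herr
  refine tendsto_of_tendsto_of_dist hlim (herr.congr fun n => ?_)
  have hphase_zero := fun x => by simpa only [sub_zero] using hphase n x 0
  rw [dist_comm, dist_eq_norm, Function.comp_apply, hphase]
  simp only [hphase_zero, ← mul_expect, ← mul_sub, norm_mul, Complex.norm_exp_ofReal_mul_I, one_mul]

end CentralLimit

section Convergence

instance (n k : ℕ) : IsProbabilityMeasure (permVecUniform n k) :=
  inferInstanceAs (IsProbabilityMeasure (PMF.toMeasure _))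

theorem integral_permVecUniform {n k : ℕ} (f : (Fin k → Perm (Fin n)) → ℂ) :
    ∫ ω, f ω ∂permVecUniform n k = 𝔼 ω, f ω := by
  have : DiscreteMeasurableSpace (Fin k → Perm (Fin n)) :=
    ⟨fun _ => MeasurableSpace.measurableSet_top⟩
  rw [permVecUniform, PMF.integral_eq_sum, Fintype.expect_eq_sum_div_card, sum_div]
  refine sum_congr rfl fun ω _ => ?_
  simp [div_eq_inv_mul]

theorem charFun_map_permVecUniform {n k : ℕ} (X : (Fin k → Perm (Fin n)) → ℝ) (t : ℝ) :
    charFun (Measure.map X (permVecUniform n k)) t =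
      𝔼 ω, Complex.exp ((t * X ω : ℝ) * Complex.I) := by
  have hX : Measurable X := measurable_from_top
  rw [charFun_apply_real, integral_map hX.aemeasurable (by fun_prop), integral_permVecUniform]
  simp only [Complex.ofReal_mul]

theorem tendsto_integral_of_tendsto_charFun {μ : ℕ → Measure ℝ} {ν : Measure ℝ}
    [∀ n, IsProbabilityMeasure (μ n)] [IsProbabilityMeasure ν]
    (h : ∀ t, Tendsto (fun n => charFun (μ n) t) atTop (𝓝 (charFun ν t)))
    (g : BoundedContinuousFunction ℝ ℝ) :
    Tendsto (fun n => ∫ x, g x ∂μ n) atTop (𝓝 (∫ x, g x ∂ν)) :=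
  ProbabilityMeasure.tendsto_iff_forall_integral_tendsto.1
    ((ProbabilityMeasure.tendsto_iff_tendsto_charFun (μ := fun n => ⟨μ n, inferInstance⟩)
      (μ₀ := ⟨ν, inferInstance⟩)).2 h) g

theorem charFun_gaussianReal_logDet {y : ℝ} (hy : y < 1) (t : ℝ) :
    charFun (ProbabilityTheory.gaussianReal (3 / 2 * Real.log (1 - y) + 2 * y)
      (Real.toNNReal (-2 * Real.log (1 - y) - 2 * y))) t =
      Complex.exp ((t * (1 / 2 * Real.log (1 - y) + y) : ℝ) * Complex.I -
        mellinCoeff t * (-2 * Real.log (1 - y) - 2 * y : ℝ)) := by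
  have hvar : 0 ≤ -2 * Real.log (1 - y) - 2 * y := by
    linarith [Real.log_le_sub_one_of_pos (by linarith : 0 < 1 - y)]
  rw [ProbabilityTheory.charFun_gaussianReal, Real.coe_toNNReal _ hvar, mellinCoeff]
  push_cast
  ring_nf

theorem spearman_logdet_clt_general {C y : ℝ} (hy : y < 1) {p : ℕ → ℕ}
    (hpy : Tendsto (fun n => (p n : ℝ) / n) atTop (𝓝 y)) {a : ∀ n, Fin n → ℝ}
    (ha : ∀ᶠ n in atTop, IsScore C (a n)) (g : BoundedContinuousFunction ℝ ℝ) :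
    Tendsto (fun n => ∫ x, g x ∂(Measure.map (fun ω => Real.log (scoreGram (a n) ω).det
        + ((n : ℝ) - p n) * Real.log (1 - (p n : ℝ) / n) + p n) (permVecUniform n (p n))))
      atTop (𝓝 (∫ x, g x ∂(ProbabilityTheory.gaussianReal (3 / 2 * Real.log (1 - y) + 2 * y)
        (Real.toNNReal (-2 * Real.log (1 - y) - 2 * y))))) := by
  have (n : ℕ) := Measure.isProbabilityMeasure_map (μ := permVecUniform n (p n))
    (measurable_from_top (f := fun ω => Real.log (scoreGram (a n) ω).det
      + ((n : ℝ) - p n) * Real.log (1 - (p n : ℝ) / n) + p n)).aemeasurable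
  refine tendsto_integral_of_tendsto_charFun (fun t => ?_) g
  simp only [charFun_map_permVecUniform, charFun_gaussianReal_logDet hy]
  exact tendsto_expect_exp_log_det hy hpy ha t

end Convergence

section SpearmanScores

variable {n : ℕ}

/-- The ranks `1, …, n`, centred and scaled to a vector of unit length. -/
noncomputable def spearmanScore (n : ℕ) (i : Fin n) : ℝ :=
  √(12 / ((n : ℝ) * ((n : ℝ) ^ 2 - 1))) * ((i : ℝ) + 1 - ((n : ℝ) + 1) / 2)

theorem sum_range_add_one_sub (n : ℕ) (c : ℝ) :
    ∑ i ∈ range n, ((i : ℝ) + 1 - c) = n * (n + 1) / 2 - n * c := by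
  induction n with
  | zero => simp
  | succ n ih =>
    rw [sum_range_succ, ih]
    push_cast
    ring

theorem sum_range_add_one_sub_sq (n : ℕ) (c : ℝ) : ∑ i ∈ range n, ((i : ℝ) + 1 - c) ^ 2 =
    n * (n + 1) * (2 * n + 1) / 6 - n * (n + 1) * c + n * c ^ 2 := by
  induction n with
  | zero => simp
  | succ n ih =>
    rw [sum_range_succ, ih]
    push_cast
    ring

theorem isScore_spearmanScore (hn : 2 ≤ n) : IsScore 3 (spearmanScore n) where
  sum_eq_zero := by
    simp only [spearmanScore, ← mul_sum]
    rw [Fin.sum_univ_eq_sum_range (fun i : ℕ => (i : ℝ) + 1 - (n + 1) / 2), sum_range_add_one_sub]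
    ring
  sum_sq_eq_one := by
    have : (2 : ℝ) ≤ n := by exact_mod_cast hn
    have : 0 < (n : ℝ) ^ 2 - 1 := by nlinarith
    simp only [spearmanScore, mul_pow, ← mul_sum]
    rw [Real.sq_sqrt (by positivity),
      Fin.sum_univ_eq_sum_range (fun i : ℕ => ((i : ℝ) + 1 - (n + 1) / 2) ^ 2),
      sum_range_add_one_sub_sq]
    field_simp
    ring
  sq_le i := by
    have : (2 : ℝ) ≤ n := by exact_mod_cast hn
    have hfactor : (n : ℝ) ^ 2 - 1 = (n - 1) * (n + 1) := by ring
    have hpos : 0 < (n : ℝ) - 1 := by linarith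
    have hi : (i : ℝ) + 1 ≤ n := by exact_mod_cast i.is_lt
    have : (0 : ℝ) ≤ i := Nat.cast_nonneg _
    rw [spearmanScore, mul_pow, hfactor, Real.sq_sqrt (by positivity)]
    calc _ ≤ 12 / ((n : ℝ) * ((n - 1) * (n + 1))) * ((n - 1) / 2) ^ 2 := by
          gcongr ?_ * ?_
          exact sq_le_sq' (by linarith) (by linarith)
      _ = 3 / n * ((n - 1) / (n + 1)) := by
          field_simp
          norm_num
      _ ≤ 3 / n := mul_le_of_le_one_right (by positivity)
          ((div_le_one (by linarith)).2 (by linarith))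

theorem scoreGram_spearmanScore (n p : ℕ) (ω : Fin p → Perm (Fin n)) :
    scoreGram (spearmanScore n) ω = spearmanRho n p ω := by
  have hpos : 0 ≤ 12 / ((n : ℝ) * ((n : ℝ) ^ 2 - 1)) := by
    rcases n with _ | n
    · simp
    · push_cast
      ring_nf
      positivity
  ext i j
  rw [scoreGram, Matrix.of_apply, dotProduct, spearmanRho, Matrix.smul_apply, Matrix.sum_apply,
    smul_eq_mul, mul_sum, ← Real.mul_self_sqrt hpos]
  refine sum_congr rfl fun k _ => ?_
  simp only [Function.comp_apply, spearmanScore, Matrix.vecMulVec_apply]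
  ring

end SpearmanScores

/-- (CLT for the log-determinant of Spearman's rank correlation matrix.)
If `p(n)/n → y ∈ (0,1)`, then `log det ρₙ + (n − p(n))·log(1 − p(n)/n) + p(n)` converges in
distribution to `N((3/2)log(1−y) + 2y, −2log(1−y) − 2y)`; convergence in distribution is
expressed by testing against all bounded continuous functions. -/
theorem spearman_logdet_clt (y : ℝ) (hy0 : 0 < y) (hy1 : y < 1)
    (p : ℕ → ℕ) (hp : ∀ n, 1 ≤ p n)
    (hpy : Filter.Tendsto (fun n => (p n : ℝ) / (n : ℝ)) Filter.atTop (nhds y)) :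
    ∀ g : BoundedContinuousFunction ℝ ℝ,
      Filter.Tendsto
        (fun n => ∫ x, g x ∂(Measure.map
          (fun ω => Real.log (spearmanRho n (p n) ω).det
            + ((n : ℝ) - (p n : ℝ)) * Real.log (1 - (p n : ℝ) / (n : ℝ)) + (p n : ℝ))
          (permVecUniform n (p n))))
        Filter.atTop
        (nhds (∫ x, g x ∂(ProbabilityTheory.gaussianReal
          ((3 / 2) * Real.log (1 - y) + 2 * y)
          (Real.toNNReal (-2 * Real.log (1 - y) - 2 * y))))) :=
  fun g => by
    simpa only [scoreGram_spearmanScore] using spearman_logdet_clt_general hy1 hpy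
      ((eventually_ge_atTop 2).mono fun _ => isScore_spearmanScore) g
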